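/- Let R be a local hypersurface, M and N finitely generated R-modules with M or N of rank, and suppose M ⊗_R N is maximal Cohen-Macaulay. Then both M and N are maximal Cohen-Macaulay, and at least one of M, N is free. -/

import Mathlib

open RingTheory.Sequence CategoryTheory

universe u

noncomputable section

/-- Depth of a module: supremum of lengths of weakly regular sequences consisting of nonunits.
For a f.g. module over a noetherian local ring this is the usual depth, and the zero module
has depth `⊤`. -/
def rdepth (A : Type u) [CommRing A] (M : Type u) [AddCommGroup M] [Module A M] : ℕ∞ :=
  sSup {n : ℕ∞ | ∃ rs : List A, (rs.length : ℕ∞) = n ∧ (∀ r ∈ rs, r ∈ nonunits A) ∧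
    RingTheory.Sequence.IsWeaklyRegular M rs}

/-- Serre's condition `(S_n)`. -/
def SerreCond (R : Type u) [CommRing R] (M : Type u) [AddCommGroup M] [Module R M] (n : ℕ) :
    Prop :=
  ∀ (p : Ideal R) (hp : p.IsPrime), Nontrivial (LocalizedModule p.primeCompl M) →
    min (n : ℕ∞) (Order.height (⟨p, hp⟩ : PrimeSpectrum R)) ≤
      rdepth (Localization.AtPrime p) (LocalizedModule p.primeCompl M)

/-- `Tor_i^R(M, N)` as an object of `ModuleCat R`. -/
def TorModCat (R : Type u) [CommRing R] (i : ℕ) (M N : Type u) [AddCommGroup M] [Module R M]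
    [AddCommGroup N] [Module R N] : ModuleCat.{u} R :=
  ((Tor (ModuleCat.{u} R) i).obj (ModuleCat.of R M)).obj (ModuleCat.of R N)

/-- `Tor_i^R(M, N)` as a type (with its `R`-module structure given by instances below). -/
def TorM (R : Type u) [CommRing R] (i : ℕ) (M N : Type u) [AddCommGroup M] [Module R M]
    [AddCommGroup N] [Module R N] : Type u :=
  TorModCat R i M N

instance (R : Type u) [CommRing R] (i : ℕ) (M N : Type u) [AddCommGroup M] [Module R M]
    [AddCommGroup N] [Module R N] : AddCommGroup (TorM R i M N) :=
  inferInstanceAs (AddCommGroup (TorModCat R i M N))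

instance (R : Type u) [CommRing R] (i : ℕ) (M N : Type u) [AddCommGroup M] [Module R M]
    [AddCommGroup N] [Module R N] : Module R (TorM R i M N) :=
  inferInstanceAs (Module R (TorModCat R i M N))

/-- A regular local ring: noetherian local, whose maximal ideal is generated by a
(weakly) regular sequence. -/
def IsRegLocal (Q : Type u) [CommRing Q] : Prop :=
  IsNoetherianRing Q ∧ IsLocalRing Q ∧
    ∃ rs : List Q, RingTheory.Sequence.IsWeaklyRegular Q rs ∧ (∀ r ∈ rs, r ∈ nonunits Q) ∧
      Ideal.span {x | x ∈ rs} = Ideal.span (nonunits Q)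

/-- A (local) complete intersection: noetherian local ring whose completion is a regular
local ring modulo a regular sequence (of nonunits). -/
def IsCIRing (R : Type u) [CommRing R] : Prop :=
  IsNoetherianRing R ∧ IsLocalRing R ∧
    ∃ (Q : Type u) (_ : CommRing Q), IsRegLocal Q ∧
      ∃ rs : List Q, (∀ r ∈ rs, r ∈ nonunits Q) ∧ RingTheory.Sequence.IsWeaklyRegular Q rs ∧
        Nonempty ((Q ⧸ Ideal.span {x | x ∈ rs}) ≃+* AdicCompletion (Ideal.span (nonunits R)) R)

/-- A hypersurface: noetherian local ring whose completion is a regular local ring modulo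
a single non-zerodivisor in the maximal ideal. -/
def IsHypersurfaceRing (R : Type u) [CommRing R] : Prop :=
  IsNoetherianRing R ∧ IsLocalRing R ∧
    ∃ (Q : Type u) (_ : CommRing Q), IsRegLocal Q ∧
      ∃ f : Q, f ∈ nonunits Q ∧ f ∈ nonZeroDivisors Q ∧
        Nonempty ((Q ⧸ Ideal.span {f}) ≃+* AdicCompletion (Ideal.span (nonunits R)) R)

/-- Maximal Cohen-Macaulay module over a local ring: depth equals the Krull dimension. -/
def IsMCM (R : Type u) [CommRing R] (M : Type u) [AddCommGroup M] [Module R M] : Prop :=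
  (rdepth R M : WithBot ℕ∞) = ringKrullDim R

/-- Cohen-Macaulay local ring. -/
def IsCMLocalRing (A : Type u) [CommRing A] : Prop :=
  IsNoetherianRing A ∧ IsLocalRing A ∧ (rdepth A A : WithBot ℕ∞) = ringKrullDim A

/-- `M` has (constant) rank: free of the same rank at every minimal prime. -/
def HasRank (R : Type u) [CommRing R] (M : Type u) [AddCommGroup M] [Module R M] : Prop :=
  ∃ r : ℕ, ∀ (p : Ideal R) (hp : p.IsPrime), p ∈ minimalPrimes R →
    Nonempty ((LocalizedModule (@Ideal.primeCompl R _ p hp) M)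
      ≃ₗ[Localization (@Ideal.primeCompl R _ p hp)]
      (Fin r → Localization (@Ideal.primeCompl R _ p hp)))

/-- Projective dimension at most `n`. -/
def pdLE (R : Type u) [CommRing R] : ℕ → ∀ (M : Type u) [AddCommGroup M] [Module R M], Prop
  | 0, M, _, _ => Module.Projective R M
  | n+1, M, _, _ => ∃ (P : Type u) (_ : AddCommGroup P) (_ : Module R P),
      Module.Projective R P ∧ ∃ f : P →ₗ[R] M, Function.Surjective f ∧
        pdLE R n (LinearMap.ker f)

/-- Injective dimension at most `n`. -/
def idLE (R : Type u) [CommRing R] : ℕ → ∀ (M : Type u) [AddCommGroup M] [Module R M], Prop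
  | 0, M, _, _ => Module.Injective R M
  | n+1, M, _, _ => ∃ (I : Type u) (_ : AddCommGroup I) (_ : Module R I),
      Module.Injective R I ∧ ∃ f : M →ₗ[R] I, Function.Injective f ∧
        idLE R n (I ⧸ LinearMap.range f)

/-- Gorenstein local ring: noetherian local with finite self-injective dimension. -/
def IsGorensteinLocalRing (R : Type u) [CommRing R] : Prop :=
  IsNoetherianRing R ∧ IsLocalRing R ∧ ∃ n : ℕ, idLE R n R

/-- The map `M → R^ν` obtained from a free cover `ε : R^ν ↠ M^*` by dualizing and composing
with the biduality map; its cokernel is the pushforward `M₁`. -/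
def pushMap (R M : Type u) [CommRing R] [AddCommGroup M] [Module R M] {ν : ℕ}
    (ε : (Fin ν → R) →ₗ[R] Module.Dual R M) : M →ₗ[R] (Fin ν → R) where
  toFun m := fun i => ε (Pi.single i 1) m
  map_add' x y := by funext i; simp
  map_smul' r x := by funext i; simp

/-- Length of a module, as the Krull dimension of its lattice of submodules. -/
def mlen (R : Type u) [CommRing R] (M : Type u) [AddCommGroup M] [Module R M] :
    WithBot ℕ∞ :=
  Order.krullDim (Submodule R M)

/-- An unramified regular local ring: equicharacteristic (contains a field), or of mixed
characteristic `(0, p)` with `p` not in the square of the maximal ideal. -/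
def IsUnramifiedRegLocal (Q : Type u) [CommRing Q] : Prop :=
  IsRegLocal Q ∧
    ((∃ (K : Type u) (_ : Field K), Nonempty (K →+* Q)) ∨
     (CharZero Q ∧ ∃ p : ℕ, p.Prime ∧ (p : Q) ∈ nonunits Q ∧
        (p : Q) ∉ (Ideal.span (nonunits Q)) ^ 2))

/-!
Passing to the completion `S` of `R` changes neither depth nor dimension, since `S` is faithfully
flat over `R` with `m_S = m_R S`, and freeness descends from `S` to `R`. So we may assume
`R = Q / f` with `Q` a regular local ring. A module of rank is, up to multiplication by a
nonzerodivisor, isomorphic to a free module. If `dim R = 0` the nonzerodivisor is a unit. Otherwise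
dividing `M` and `N` by their submodules of finite length does not change `M ⊗ N`, which has
positive depth, and cutting by general elements of the maximal ideal reduces to `dim R = 1`.

There `N` is the cokernel of a map `a` in a matrix factorization `(a, b)` of `f` over `Q`. The rank
of `M` and the depth of `M ⊗ N` make the pair `(b, a)` exact on `F ⊗ M`, that is, a `Tor` module
vanishes, and a length count carries this over to `(a, b)`. Both survive reduction modulo an `x`
such that `Q / x` is a discrete valuation ring with uniformizer `t`, over which `f` is a unit times
`t ^ (e + 1)`. Now `M / xM` is a sum of modules `Q / (x, t ^ c)`. If only `c = 0` and `c = e + 1`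
occur, then `M / xM` is free over `R / x`, so `M` is free. A summand with `0 < c ≤ e` has vanishing
`Tor` against `N / xN`, which forces `N / xN`, hence `N`, to be free.
-/

open IsLocalRing
open scoped Pointwise TensorProduct

section RegularLocalRing

theorem exists_mem_notMem_of_finite {R : Type*} [CommRing R] {I J : Ideal R}
    {S : Set (Ideal R)} (hS : S.Finite) (hprime : ∀ p ∈ S, p.IsPrime)
    (hIS : ∀ p ∈ S, ¬ I ≤ p) (hIJ : ¬ I ≤ J) : ∃ x ∈ I, x ∉ J ∧ ∀ p ∈ S, x ∉ p := by
  by_contra! hcover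
  obtain ⟨p, rfl | hp, hle⟩ :=
    (Ideal.subset_union_prime_finite (hS.insert J) (f := id) J J (I := I) (by
      rintro i (rfl | hi) hne _
      exacts [absurd rfl hne, hprime i hi])).1 fun x hx ↦ by
        by_cases hxJ : x ∈ J
        · exact Set.mem_biUnion (Set.mem_insert _ _) hxJ
        · obtain ⟨p, hp, hxp⟩ := hcover x hx hxJ
          exact Set.mem_biUnion (Set.mem_insert_of_mem _ hp) hxp
  exacts [hIJ hle, hIS p hp hle]

variable {Q : Type*} [CommRing Q]

theorem exists_isUnit_of_sum_notMem_sq [IsLocalRing Q] {s : Finset Q}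
    (hs : ∀ i ∈ s, i ∈ maximalIdeal Q) {a : Q → Q}
    (hsum : ∑ i ∈ s, a i * i ∉ maximalIdeal Q ^ 2) : ∃ i ∈ s, IsUnit (a i) := by
  by_contra! hnonunit
  refine hsum (Ideal.sum_mem _ fun i hi ↦ ?_)
  rw [pow_two]
  exact Ideal.mul_mem_mul ((mem_maximalIdeal _).2 (hnonunit i hi)) (hs i hi)

theorem exists_span_insert_eq_maximalIdeal [IsLocalRing Q] [IsNoetherianRing Q] {x : Q}
    (hx : x ∈ maximalIdeal Q) (hx2 : x ∉ maximalIdeal Q ^ 2) :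
    ∃ t : Finset Q, t.card + 1 = (maximalIdeal Q).spanFinrank ∧
      Ideal.span (insert x (t : Set Q)) = maximalIdeal Q := by
  classical
  obtain ⟨s, hcard, hs⟩ :=
    (IsNoetherian.noetherian (maximalIdeal Q)).exists_span_finset_card_eq_spanFinrank
  have hsub : ∀ i ∈ s, i ∈ maximalIdeal Q := fun i hi ↦ hs ▸ Submodule.subset_span hi
  obtain ⟨a, -, rfl⟩ := Submodule.mem_span_finset.1 (hs.ge hx)
  obtain ⟨i, hi, hunit⟩ := exists_isUnit_of_sum_notMem_sq hsub hx2
  refine ⟨s.erase i, by rw [Finset.card_erase_add_one hi, hcard], le_antisymm ?_ ?_⟩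
  · rw [Ideal.span_le]
    rintro y (rfl | hy)
    exacts [hx, hsub y (Finset.mem_of_mem_erase hy)]
  · rw [← hs]
    refine Submodule.span_le.2 fun j hj ↦ ?_
    obtain rfl | hji := eq_or_ne j i
    · refine (Ideal.unit_mul_mem_iff_mem _ hunit).1 ?_
      rw [eq_sub_of_add_eq (Finset.add_sum_erase s (fun k ↦ a k * k) hi)]
      refine sub_mem (Ideal.subset_span (Set.mem_insert _ _)) (Ideal.sum_mem _ fun k hk ↦ ?_)
      exact Ideal.mul_mem_left _ _ (Ideal.subset_span (Set.mem_insert_of_mem _ hk))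
    · exact Ideal.subset_span (Set.mem_insert_of_mem _ (Finset.mem_erase.2 ⟨hji, hj⟩))

theorem spanFinrank_maximalIdeal_quotient_span_singleton_lt [IsLocalRing Q] [IsNoetherianRing Q]
    {x : Q} [IsLocalRing (Q ⧸ Ideal.span {x})] (hx : x ∈ maximalIdeal Q)
    (hx2 : x ∉ maximalIdeal Q ^ 2) :
    (maximalIdeal (Q ⧸ Ideal.span {x})).spanFinrank < (maximalIdeal Q).spanFinrank := by
  classical
  obtain ⟨t, hcard, ht⟩ := exists_span_insert_eq_maximalIdeal hx hx2
  have himage : maximalIdeal (Q ⧸ Ideal.span {x}) =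
      Ideal.span (t.image (Ideal.Quotient.mk (Ideal.span {x}))) := by
    rw [← map_maximalIdeal_of_surjective _ (Ideal.Quotient.mk_surjective (I := Ideal.span {x})),
      ← ht, Ideal.map_span, Set.image_insert_eq, Ideal.Quotient.mk_singleton_self,
      Ideal.span_insert_zero, Finset.coe_image]
  calc (maximalIdeal (Q ⧸ Ideal.span {x})).spanFinrank
      ≤ (t.image (Ideal.Quotient.mk (Ideal.span {x}))).card := by
        rw [himage, ← Set.ncard_coe_finset]
        exact Submodule.spanFinrank_span_le_ncard_of_finite (Finset.finite_toSet _)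
    _ ≤ t.card := Finset.card_image_le
    _ < (maximalIdeal Q).spanFinrank := by omega

theorem isLocalRing_quotient_span_singleton [IsLocalRing Q] {x : Q} (hx : x ∈ maximalIdeal Q) :
    IsLocalRing (Q ⧸ Ideal.span {x}) := by
  have : Nontrivial (Q ⧸ Ideal.span {x}) :=
    Ideal.Quotient.nontrivial_iff.2 fun htop ↦
      (mem_maximalIdeal x).1 hx (Ideal.span_singleton_eq_top.1 htop)
  exact .of_surjective' _ Ideal.Quotient.mk_surjective

theorem smul_top_eq_span_singleton (x : Q) : x • (⊤ : Ideal Q) = Ideal.span {x} := by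
  rw [← Submodule.ideal_span_singleton_smul, smul_eq_mul, Ideal.mul_top]

theorem ringKrullDim_le_ringKrullDim_quotient_span_singleton_add_one [IsLocalRing Q]
    [IsNoetherianRing Q] {x : Q} (hx : x ∈ maximalIdeal Q) :
    ringKrullDim Q ≤ ringKrullDim (Q ⧸ Ideal.span {x}) + 1 := by
  rw [← smul_top_eq_span_singleton]
  exact ringKrullDim_le_ringKrullDim_quotSMulTop_succ hx

theorem isRegularLocalRing_quotient_span_singleton [IsRegularLocalRing Q] {x : Q}
    (hx : x ∈ maximalIdeal Q) (hx2 : x ∉ maximalIdeal Q ^ 2) :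
    IsRegularLocalRing (Q ⧸ Ideal.span {x}) := by
  have := isLocalRing_quotient_span_singleton hx
  refine IsRegularLocalRing.of_spanFinrank_maximalIdeal_le _ ?_
  refine ENat.WithBot.add_le_add_one_right_iff.1 ?_
  calc ((maximalIdeal (Q ⧸ Ideal.span {x})).spanFinrank + 1 : WithBot ℕ∞)
      ≤ (maximalIdeal Q).spanFinrank := by
        exact_mod_cast spanFinrank_maximalIdeal_quotient_span_singleton_lt hx hx2
    _ = ringKrullDim Q := IsRegularLocalRing.spanFinrank_maximalIdeal
    _ ≤ ringKrullDim (Q ⧸ Ideal.span {x}) + 1 :=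
        ringKrullDim_le_ringKrullDim_quotient_span_singleton_add_one hx

theorem eq_bot_of_le_span_singleton_of_notMem [IsLocalRing Q] [IsNoetherianRing Q] {x : Q}
    (hx : x ∈ maximalIdeal Q) {p : Ideal Q} (hp : p.IsPrime) (hle : p ≤ Ideal.span {x})
    (hxp : x ∉ p) : p = ⊥ := by
  refine Submodule.eq_bot_of_le_smul_of_le_jacobson_bot (maximalIdeal Q) p
    (IsNoetherian.noetherian _) (fun y hy ↦ ?_) (maximalIdeal_le_jacobson _)
  obtain ⟨a, rfl⟩ := Ideal.mem_span_singleton.1 (hle hy)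
  exact Ideal.mul_mem_mul hx ((hp.mem_or_mem hy).resolve_left hxp)

theorem not_maximalIdeal_le_of_height_lt_ringKrullDim [IsLocalRing Q] {p : Ideal Q}
    (hlt : (p.height : WithBot ℕ∞) < ringKrullDim Q) :
    ¬ maximalIdeal Q ≤ p := fun hle ↦ by
  rw [← maximalIdeal_height_eq_ringKrullDim] at hlt
  exact hlt.not_ge (by exact_mod_cast Ideal.height_mono hle)

theorem isDomain_of_isRegularLocalRing (Q : Type*) [CommRing Q] [IsRegularLocalRing Q] :
    IsDomain Q := by
  induction hn : (maximalIdeal Q).spanFinrank using Nat.strong_induction_on generalizing Q with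
  | _ n ih =>
  by_cases hdim : ringKrullDim Q = 0
  · rw [← IsRegularLocalRing.spanFinrank_maximalIdeal] at hdim
    have hbot : maximalIdeal Q = ⊥ :=
      (Submodule.spanFinrank_eq_zero_iff_eq_bot (IsNoetherian.noetherian _)).1
        (by exact_mod_cast hdim)
    exact (isField_iff_maximalIdeal_eq.2 hbot).isDomain
  have hpos : 0 < ringKrullDim Q := ringKrullDim_nonneg_of_nontrivial.lt_of_ne (Ne.symm hdim)
  obtain ⟨x, hx, hx2, hxmin⟩ := exists_mem_notMem_of_finite
    (minimalPrimes.finite_of_isNoetherianRing Q) (fun p hp ↦ hp.1.1)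
    (fun p hp ↦ not_maximalIdeal_le_of_height_lt_ringKrullDim (by
      have := hp.1.1
      rwa [Ideal.height_eq_zero_iff.2 hp]))
    (maximalIdeal_sq_lt_of_ringKrullDim_ne_zero hdim).not_ge
  have := isRegularLocalRing_quotient_span_singleton hx hx2
  have : IsDomain (Q ⧸ Ideal.span {x}) := ih _
    (hn ▸ spanFinrank_maximalIdeal_quotient_span_singleton_lt hx hx2) _ rfl
  have hprime : (Ideal.span {x}).IsPrime := (Ideal.Quotient.isDomain_iff_prime _).1 this
  obtain ⟨p, hp, hle⟩ := Ideal.exists_minimalPrimes_le (I := ⊥) (J := Ideal.span {x}) bot_le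
  obtain rfl := eq_bot_of_le_span_singleton_of_notMem hx hp.1.1 hle (hxmin p hp)
  have := hp.1.1
  exact .of_bot_isPrime Q

theorem isDiscreteValuationRing_of_ringKrullDim_eq_one [IsRegularLocalRing Q] [IsDomain Q]
    (hdim : ringKrullDim Q = 1) : IsDiscreteValuationRing Q := by
  have hfield : ¬ IsField Q := fun hf ↦ by simp [ringKrullDim_eq_zero_of_isField hf] at hdim
  have hrank : (maximalIdeal Q).spanFinrank = 1 := by
    exact_mod_cast IsRegularLocalRing.spanFinrank_maximalIdeal.trans hdim
  exact ((IsDiscreteValuationRing.TFAE Q hfield).out 0 4).2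
    ((Submodule.spanFinrank_eq_one_iff _).1 hrank).1

theorem span_nonunits_eq_maximalIdeal (R : Type*) [CommRing R] [IsLocalRing R] :
    Ideal.span (nonunits R) = maximalIdeal R :=
  Ideal.span_eq (maximalIdeal R)

theorem IsRegLocal.isRegularLocalRing {Q : Type u} [CommRing Q] (h : IsRegLocal Q) :
    IsRegularLocalRing Q := by
  classical
  obtain ⟨_, _, rs, hreg, hmem, hspan⟩ := h
  have hmax : Ideal.ofList rs = maximalIdeal Q := hspan.trans (span_nonunits_eq_maximalIdeal Q)
  have hregular : IsRegular Q rs :=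
    (isRegular_iff_isWeaklyRegular_of_subset_maximalIdeal hmem).2 hreg
  have hlength : (rs.length : WithBot ℕ∞) = ringKrullDim Q := by
    rw [← ringKrullDim_add_length_eq_ringKrullDim_of_isRegular rs hregular, hmax,
      show ringKrullDim (Q ⧸ maximalIdeal Q) = 0 from
        ringKrullDim_eq_zero_of_field (ResidueField Q), zero_add]
  refine .of_spanFinrank_maximalIdeal_le _ ?_
  rw [← hlength, ← hmax, Ideal.ofList, ← List.coe_toFinset]
  exact_mod_cast (Submodule.spanFinrank_span_le_ncard_of_finite (Finset.finite_toSet _)).trans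
    ((Set.ncard_coe_finset _).trans_le rs.toFinset_card_le)

end RegularLocalRing

section AssociatedPrimes

variable {R : Type*} [CommRing R]

theorem exists_mem_forall_notMem_of_finite {I : Ideal R} {S : Set (Ideal R)} (hS : S.Finite)
    (hprime : ∀ p ∈ S, p.IsPrime) (hIS : ∀ p ∈ S, ¬ I ≤ p) : ∃ x ∈ I, ∀ p ∈ S, x ∉ p := by
  obtain rfl | ⟨J, hJ⟩ := S.eq_empty_or_nonempty
  · exact ⟨0, I.zero_mem, by simp⟩
  · obtain ⟨x, hx, -, hxS⟩ := exists_mem_notMem_of_finite hS hprime hIS (hIS J hJ)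
    exact ⟨x, hx, hxS⟩

variable {M : Type*} [AddCommGroup M] [Module R M]

theorem mk_eq_zero_iff_exists_eq_smul {x : R} {v : M} :
    (Submodule.Quotient.mk v : QuotSMulTop x M) = 0 ↔ ∃ w, v = x • w := by
  rw [Submodule.Quotient.mk_eq_zero, Submodule.mem_smul_pointwise_iff_exists]
  simp [eq_comm]

theorem isSMulRegular_iff_forall_notMem_associatedPrimes [IsNoetherianRing R] {x : R} :
    IsSMulRegular M x ↔ ∀ p ∈ associatedPrimes R M, x ∉ p := by
  have h := Set.ext_iff.1 (biUnion_associatedPrimes_eq_compl_regular R M) x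
  rw [Set.mem_compl_iff, Set.mem_iUnion₂, Set.mem_ofPred_eq] at h
  simpa using h.symm.not

variable [IsLocalRing R]

theorem not_maximalIdeal_le_of_mem_associatedPrimes
    (h : maximalIdeal R ∉ associatedPrimes R M) {p : Ideal R} (hp : p ∈ associatedPrimes R M) :
    ¬ maximalIdeal R ≤ p := fun hle ↦
  h ((maximalIdeal.isMaximal R).eq_of_le hp.isPrime.ne_top hle ▸ hp)

variable [IsNoetherianRing R]

theorem maximalIdeal_notMem_associatedPrimes_iff :
    maximalIdeal R ∉ associatedPrimes R M ↔
      ∀ v : M, (∀ a ∈ maximalIdeal R, a • v = 0) → v = 0 := by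
  rw [AssociatedPrimes.mem_iff, isAssociatedPrime_iff]
  refine ⟨fun h v hv ↦ by_contra fun hne ↦ h ⟨inferInstance, v, ?_⟩, ?_⟩
  · refine (maximalIdeal.isMaximal R).eq_of_le (fun htop ↦ hne ?_) fun a ha ↦ ?_
    · simpa using (Ideal.eq_top_iff_one _).1 htop
    · simpa using hv a ha
  · rintro h ⟨hprime, v, hv⟩
    refine hprime.ne_top ((Ideal.eq_top_iff_one _).2 ?_)
    rw [hv]
    simpa using h v fun a ha ↦ by simpa [hv] using ha

theorem eq_zero_of_pow_maximalIdeal_smul_eq_zero (h : maximalIdeal R ∉ associatedPrimes R M)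
    (j : ℕ) {v : M} (hv : ∀ a ∈ maximalIdeal R ^ j, a • v = 0) : v = 0 := by
  induction j generalizing v with
  | zero => simpa using hv 1
  | succ j ih =>
    refine maximalIdeal_notMem_associatedPrimes_iff.1 h v fun a ha ↦ ih fun b hb ↦ ?_
    rw [smul_smul]
    exact hv _ (pow_succ (maximalIdeal R) j ▸ Ideal.mul_mem_mul hb ha)

theorem maximalIdeal_notMem_associatedPrimes_quotSMulTop {x y : R} (hx : IsSMulRegular M x)
    (hy : IsSMulRegular M y) (hymem : y ∈ maximalIdeal R)
    (h : maximalIdeal R ∉ associatedPrimes R (QuotSMulTop y M)) :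
    maximalIdeal R ∉ associatedPrimes R (QuotSMulTop x M) := by
  rw [maximalIdeal_notMem_associatedPrimes_iff] at h ⊢
  rintro ⟨u⟩ hu
  replace hu : ∀ a ∈ maximalIdeal R, ∃ w, a • u = x • w := fun a ha ↦
    mk_eq_zero_iff_exists_eq_smul.1 (hu a ha)
  obtain ⟨v, hv⟩ := hu y hymem
  obtain ⟨w, rfl⟩ : ∃ w, v = y • w := mk_eq_zero_iff_exists_eq_smul.1 <| h _ fun a ha ↦ by
    obtain ⟨w, hw⟩ := hu a ha
    refine mk_eq_zero_iff_exists_eq_smul.2 ⟨w, hx ?_⟩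
    change x • a • v = x • y • w
    rw [smul_comm x a, ← hv, smul_comm a y, hw, smul_comm]
  refine mk_eq_zero_iff_exists_eq_smul.2 ⟨w, hy ?_⟩
  change y • u = y • x • w
  rw [hv, smul_comm]

end AssociatedPrimes

section Depth

variable {R M N : Type u} [CommRing R] [AddCommGroup M] [Module R M] [AddCommGroup N] [Module R N]

theorem le_rdepth_iff {n : ℕ} :
    n ≤ rdepth R M ↔ ∃ rs : List R, rs.length = n ∧ (∀ r ∈ rs, r ∈ nonunits R) ∧
      IsWeaklyRegular M rs := by
  refine ⟨fun h ↦ ?_, fun ⟨rs, hlen, hmem, hreg⟩ ↦ le_sSup ⟨rs, by rw [hlen], hmem, hreg⟩⟩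
  obtain _ | k := n
  · exact ⟨[], rfl, by simp, .nil R M⟩
  have hlt : (k : ℕ∞) < rdepth R M := lt_of_lt_of_le (by exact_mod_cast k.lt_succ_self) h
  obtain ⟨_, ⟨rs, rfl, hmem, hreg⟩, hk⟩ := lt_sSup_iff.1 hlt
  refine ⟨rs.take (k + 1), ?_, fun r hr ↦ hmem r (List.mem_of_mem_take hr), ?_⟩
  · exact List.length_take_of_le (by exact_mod_cast hk)
  · rw [← List.take_append_drop (k + 1) rs, isWeaklyRegular_append_iff] at hreg
    exact hreg.1

theorem rdepth_le_of_isWeaklyRegular_imp {S L : Type u} [CommRing S] [AddCommGroup L] [Module S L]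
    (f : R → S) (hf : ∀ r ∈ nonunits R, f r ∈ nonunits S)
    (h : ∀ rs : List R, IsWeaklyRegular M rs → IsWeaklyRegular L (rs.map f)) :
    rdepth R M ≤ rdepth S L := by
  refine sSup_le_sSup ?_
  rintro _ ⟨rs, rfl, hmem, hreg⟩
  refine ⟨rs.map f, by simp, ?_, h rs hreg⟩
  simpa using fun r hr ↦ hf r (hmem r hr)

theorem isWeaklyRegular_of_leftInverse {i : M →ₗ[R] N} {p : N →ₗ[R] M}
    (h : p ∘ₗ i = LinearMap.id) {rs : List R} (hN : IsWeaklyRegular N rs) :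
    IsWeaklyRegular M rs := by
  induction rs generalizing M N with
  | nil => exact .nil R M
  | cons r rs ih =>
    rw [isWeaklyRegular_cons_iff] at hN ⊢
    refine ⟨hN.1.of_injective i (LinearMap.injective_of_comp_eq_id i p h), ?_⟩
    exact ih (i := QuotSMulTop.map r i) (p := QuotSMulTop.map r p)
      (by rw [← QuotSMulTop.map_comp, h, QuotSMulTop.map_id]) hN.2

theorem rdepth_le_of_leftInverse {i : M →ₗ[R] N} {p : N →ₗ[R] M}
    (h : p ∘ₗ i = LinearMap.id) : rdepth R N ≤ rdepth R M :=
  rdepth_le_of_isWeaklyRegular_imp id (fun _ ↦ id) fun rs hrs ↦ by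
    simpa using isWeaklyRegular_of_leftInverse h hrs

theorem rdepth_congr (e : M ≃ₗ[R] N) : rdepth R M = rdepth R N :=
  le_antisymm (rdepth_le_of_leftInverse (i := e.symm.toLinearMap) (p := e.toLinearMap) (by simp))
    (rdepth_le_of_leftInverse (i := e.toLinearMap) (p := e.symm.toLinearMap) (by simp))

theorem rdepth_eq_top_of_subsingleton [Nontrivial R] [Subsingleton M] : rdepth R M = ⊤ := by
  refine ENat.eq_top_iff_forall_ge.2 fun n ↦ le_rdepth_iff.2 ⟨.replicate n 0, by simp, ?_, ?_⟩
  · simp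
  · exact (isWeaklyRegular_iff M _).2 fun i _ ↦ Function.injective_of_subsingleton _

variable [IsLocalRing R]

theorem succ_le_rdepth_iff {n : ℕ} :
    ↑(n + 1) ≤ rdepth R M ↔
      ∃ x ∈ maximalIdeal R, IsSMulRegular M x ∧ n ≤ rdepth R (QuotSMulTop x M) := by
  simp only [le_rdepth_iff]
  constructor
  · rintro ⟨_ | ⟨x, rs⟩, hlen, hmem, hreg⟩
    · simp at hlen
    · obtain ⟨hx, hrs⟩ := (isWeaklyRegular_cons_iff M x rs).1 hreg
      exact ⟨x, hmem x (by simp), hx, rs, by simpa using hlen, fun r hr ↦ hmem r (by simp [hr]),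
        hrs⟩
  · rintro ⟨x, hx, hreg, rs, hlen, hmem, hrs⟩
    refine ⟨x :: rs, by simp [hlen], ?_, IsWeaklyRegular.cons hreg hrs⟩
    rintro r (_ | ⟨_, hr⟩)
    exacts [hx, hmem r hr]

theorem rdepth_eq_of_surjective_algebraMap {S L : Type u} [CommRing S] [IsLocalRing S] [Algebra R S]
    (hS : Function.Surjective (algebraMap R S)) [AddCommGroup L] [Module R L] [Module S L]
    [IsScalarTower R S L] : rdepth R L = rdepth S L := by
  have := IsLocalHom.of_surjective (algebraMap R S) hS
  refine le_antisymm (rdepth_le_of_isWeaklyRegular_imp (algebraMap R S)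
      (fun r hr ↦ mt (isUnit_of_map_unit (algebraMap R S) r) hr)
      fun rs ↦ (isWeaklyRegular_map_algebraMap_iff S L rs).2)
    (rdepth_le_of_isWeaklyRegular_imp (Function.surjInv hS)
      (fun s hs hunit ↦ hs (Function.surjInv_eq hS s ▸ hunit.map (algebraMap R S)))
      fun rs hrs ↦ (isWeaklyRegular_map_algebraMap_iff S L _).1 ?_)
  simpa [Function.comp_def, Function.surjInv_eq] using hrs

variable [IsNoetherianRing R]

theorem maximalIdeal_notMem_associatedPrimes_of_one_le_rdepth (h : 1 ≤ rdepth R M) :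
    maximalIdeal R ∉ associatedPrimes R M := by
  obtain ⟨x, hx, hreg, -⟩ := (succ_le_rdepth_iff (n := 0)).1 (by simpa using h)
  exact maximalIdeal_notMem_associatedPrimes_iff.2 fun v hv ↦
    hreg.right_eq_zero_of_smul (hv x hx)

theorem isSMulRegular_quotSMulTop_swap [Module.Finite R M] {x y : R}
    (hxmem : x ∈ maximalIdeal R) (hymem : y ∈ maximalIdeal R) (hx : IsSMulRegular M x)
    (hy : IsSMulRegular (QuotSMulTop x M) y) : IsSMulRegular (QuotSMulTop y M) x := by
  have hperm := isWeaklyRegular_of_perm_of_subset_maximalIdeal (rs := [x, y]) (rs' := [y, x])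
    (.cons hx ((isWeaklyRegular_singleton_iff _ y).2 hy)) (.swap _ _ _)
    (by simpa using ⟨hxmem, hymem⟩)
  exact (isWeaklyRegular_singleton_iff _ x).1 ((isWeaklyRegular_cons_iff M y [x]).1 hperm).2

/-- The isomorphism `(M/xM)/yM ≃ (M/yM)/xM`. -/
def quotSMulTopComm (M : Type*) [AddCommGroup M] [Module R M] (x y : R) :
    QuotSMulTop y (QuotSMulTop x M) ≃ₗ[R] QuotSMulTop x (QuotSMulTop y M) :=
  QuotSMulTop.equivQuotTensor y (QuotSMulTop x M) ≪≫ₗ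
    QuotSMulTop.tensorQuotSMulTopEquivQuotSMulTop x (R ⧸ Ideal.span {y}) M ≪≫ₗ
    QuotSMulTop.congr x (QuotSMulTop.equivQuotTensor y M).symm

theorem exists_isSMulRegular_and_isSMulRegular [Module.Finite R M] [Module.Finite R N]
    (hM : maximalIdeal R ∉ associatedPrimes R M) (hN : maximalIdeal R ∉ associatedPrimes R N) :
    ∃ z ∈ maximalIdeal R, IsSMulRegular M z ∧ IsSMulRegular N z := by
  obtain ⟨z, hz, havoid⟩ := exists_mem_forall_notMem_of_finite (I := maximalIdeal R)
    ((associatedPrimes.finite R M).union (associatedPrimes.finite R N))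
    (by rintro p (h | h) <;> exact h.isPrime)
    (by
      rintro p (h | h)
      exacts [not_maximalIdeal_le_of_mem_associatedPrimes hM h,
        not_maximalIdeal_le_of_mem_associatedPrimes hN h])
  exact ⟨z, hz,
    isSMulRegular_iff_forall_notMem_associatedPrimes.2 fun p hp ↦ havoid p (.inl hp),
    isSMulRegular_iff_forall_notMem_associatedPrimes.2 fun p hp ↦ havoid p (.inr hp)⟩

theorem le_rdepth_quotSMulTop [Module.Finite R M] {n : ℕ} (h : ↑(n + 1) ≤ rdepth R M) {x : R}
    (hxmem : x ∈ maximalIdeal R) (hx : IsSMulRegular M x) : n ≤ rdepth R (QuotSMulTop x M) := by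
  induction n generalizing M x with
  | zero => simp
  | succ n ih =>
    obtain ⟨y, hymem, hy, hdepth⟩ := succ_le_rdepth_iff.1 h
    have hMy := maximalIdeal_notMem_associatedPrimes_of_one_le_rdepth
      (le_trans (by exact_mod_cast Nat.le_add_left 1 _) hdepth)
    have hMx := maximalIdeal_notMem_associatedPrimes_quotSMulTop hx hy hymem hMy
    obtain ⟨z, hzmem, hzx, hzy⟩ := exists_isSMulRegular_and_isSMulRegular hMx hMy
    have hMz : ↑(n + 1) ≤ rdepth R (QuotSMulTop z M) :=
      succ_le_rdepth_iff.2 ⟨y, hymem, isSMulRegular_quotSMulTop_swap hymem hzmem hy hzy,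
        rdepth_congr (quotSMulTopComm M y z) ▸ ih hdepth hzmem hzy⟩
    exact succ_le_rdepth_iff.2 ⟨z, hzmem, hzx, rdepth_congr (quotSMulTopComm M z x) ▸
      ih hMz hxmem (isSMulRegular_quotSMulTop_swap hxmem hzmem hx hzx)⟩

end Depth

section Hypersurface

theorem ringKrullDim_quotient_span_singleton_of_isSMulRegular {R : Type*} [CommRing R]
    [IsLocalRing R] [IsNoetherianRing R] {n : ℕ} (hdim : ringKrullDim R = (n + 1 : ℕ)) {x : R}
    (hx : x ∈ maximalIdeal R) (hreg : IsSMulRegular R x) :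
    ringKrullDim (R ⧸ Ideal.span {x}) = n := by
  have := ringKrullDim_quotient_span_singleton_succ_eq_ringKrullDim hreg hx
  rw [hdim] at this
  exact ENat.WithBot.add_one_cancel.1 (by exact_mod_cast this)

/-- `φ` presents its target as the regular local ring `Q` modulo the nonzero nonunit `f`. -/
structure IsHypersurfacePresentation {Q R : Type*} [CommRing Q] [CommRing R] (φ : Q →+* R)
    (f : Q) : Prop where
  isRegularLocalRing : IsRegularLocalRing Q
  surjective : Function.Surjective φ
  ker_eq : RingHom.ker φ = Ideal.span {f}
  ne_zero : f ≠ 0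
  not_isUnit : ¬ IsUnit f

theorem span_singleton_le_comap_span_singleton_apply {Q R : Type*} [CommRing Q] [CommRing R]
    (φ : Q →+* R) (x : Q) : Ideal.span {x} ≤ Ideal.comap φ (Ideal.span {φ x}) := by
  rw [Ideal.span_singleton_le_iff_mem, Ideal.mem_comap]
  exact Ideal.mem_span_singleton_self (φ x)

namespace IsHypersurfacePresentation

variable {Q R : Type*} [CommRing Q] [CommRing R] {φ : Q →+* R} {f : Q}

theorem apply_eq_zero_iff (h : IsHypersurfacePresentation φ f) {q : Q} : φ q = 0 ↔ f ∣ q := by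
  rw [← RingHom.mem_ker, h.ker_eq, Ideal.mem_span_singleton]

theorem isNoetherianRing (h : IsHypersurfacePresentation φ f) : IsNoetherianRing R :=
  have := h.isRegularLocalRing
  isNoetherianRing_of_surjective Q R φ h.surjective

theorem isLocalRing (h : IsHypersurfacePresentation φ f) : IsLocalRing R := by
  have := h.isRegularLocalRing
  have : Nontrivial R := ⟨1, 0, fun h1 ↦ h.not_isUnit
    (isUnit_of_dvd_one (h.apply_eq_zero_iff.1 (by rwa [map_one])))⟩
  exact .of_surjective' φ h.surjective

theorem ringKrullDim_eq_add_one (h : IsHypersurfacePresentation φ f) :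
    ringKrullDim Q = ringKrullDim R + 1 := by
  have := h.isRegularLocalRing
  have := isDomain_of_isRegularLocalRing Q
  rw [← ringKrullDim_quotient_span_singleton_succ_eq_ringKrullDim
    (IsRegular.of_ne_zero h.ne_zero).left.isSMulRegular ((mem_maximalIdeal f).2 h.not_isUnit),
    ← ringKrullDim_eq_of_ringEquiv ((Ideal.quotEquivOfEq h.ker_eq.symm).trans
      (RingHom.quotientKerEquivOfSurjective h.surjective))]

theorem isSMulRegular_apply [IsDomain Q] (h : IsHypersurfacePresentation φ f) {x : Q}
    (hx0 : x ≠ 0) (hprime : (Ideal.span {x}).IsPrime) (hfx : f ∉ Ideal.span {x}) :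
    IsSMulRegular R (φ x) := by
  refine isSMulRegular_iff_right_eq_zero_of_smul.2 fun a ha ↦ ?_
  obtain ⟨a, rfl⟩ := h.surjective a
  rw [smul_eq_mul, ← map_mul, h.apply_eq_zero_iff] at ha
  obtain ⟨b, hb⟩ := ha
  obtain ⟨c, rfl⟩ := Ideal.mem_span_singleton.1 <| (hprime.mem_or_mem (y := b)
    (hb ▸ Ideal.mul_mem_right _ _ (Ideal.mem_span_singleton_self x))).resolve_left hfx
  exact h.apply_eq_zero_iff.2 ⟨c, mul_left_cancel₀ hx0 (by rw [hb]; ring)⟩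

variable [IsLocalRing Q]

theorem exists_mem_forall_notMem [IsLocalRing R] (h : IsHypersurfacePresentation φ f)
    (hdim : 0 < ringKrullDim R) {S : Set (Ideal R)} (hS : S.Finite)
    (hprime : ∀ p ∈ S, p.IsPrime) (hmS : ∀ p ∈ S, ¬ maximalIdeal R ≤ p) :
    ∃ x ∈ maximalIdeal Q, x ∉ maximalIdeal Q ^ 2 ∧ (∀ p ∈ S, φ x ∉ p) ∧
      ∀ p ∈ (Ideal.span {f}).minimalPrimes, x ∉ p := by
  have := h.isRegularLocalRing
  have hQ : 1 < ringKrullDim Q := by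
    rw [h.ringKrullDim_eq_add_one]
    exact lt_of_not_ge fun hle ↦ hdim.not_ge
      (ENat.WithBot.add_le_add_one_right_iff.1 (by rwa [zero_add]))
  have hprimes : ∀ p ∈ Ideal.comap φ '' S ∪ (Ideal.span {f}).minimalPrimes, p.IsPrime := by
    rintro _ (⟨p, hp, rfl⟩ | hp)
    · have := hprime p hp
      exact Ideal.comap_isPrime φ p
    · exact hp.1.1
  have hmax : ∀ p ∈ Ideal.comap φ '' S ∪ (Ideal.span {f}).minimalPrimes,
      ¬ maximalIdeal Q ≤ p := by
    rintro _ (⟨p, hp, rfl⟩ | hp)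
    · rw [← Ideal.map_le_iff_le_comap, map_maximalIdeal_of_surjective φ h.surjective]
      exact hmS p hp
    · refine not_maximalIdeal_le_of_height_lt_ringKrullDim (lt_of_le_of_lt ?_ hQ)
      exact_mod_cast Ideal.height_le_one_of_isPrincipal_of_mem_minimalPrimes _ _ hp
  obtain ⟨x, hx, hx2, hxS⟩ := exists_mem_notMem_of_finite
    ((hS.image _).union (Ideal.finite_minimalPrimes_of_isNoetherianRing Q _)) hprimes hmax
    (maximalIdeal_sq_lt_of_ringKrullDim_ne_zero (zero_lt_one.trans hQ).ne').not_ge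
  exact ⟨x, hx, hx2, fun p hp hxp ↦ hxS _ (.inl ⟨p, hp, rfl⟩) hxp, fun p hp ↦ hxS p (.inr hp)⟩

theorem notMem_span_singleton (h : IsHypersurfacePresentation φ f) {x : Q}
    (hx : x ∈ maximalIdeal Q) (hprime : (Ideal.span {x}).IsPrime)
    (hxf : ∀ p ∈ (Ideal.span {f}).minimalPrimes, x ∉ p) : f ∉ Ideal.span {x} := fun hf ↦ by
  have := h.isRegularLocalRing
  obtain ⟨p, hp, hle⟩ :=
    Ideal.exists_minimalPrimes_le ((Ideal.span_singleton_le_iff_mem _).2 hf)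
  obtain rfl := eq_bot_of_le_span_singleton_of_notMem hx hp.1.1 hle (hxf p hp)
  exact h.ne_zero (hp.1.2 (Ideal.mem_span_singleton_self f))

theorem quotient (h : IsHypersurfacePresentation φ f) {x : Q} (hx : x ∈ maximalIdeal Q)
    (hx2 : x ∉ maximalIdeal Q ^ 2) (hfx : f ∉ Ideal.span {x}) :
    IsHypersurfacePresentation
      (Ideal.quotientMap (Ideal.span {φ x}) φ
        (span_singleton_le_comap_span_singleton_apply φ x))
      (Ideal.Quotient.mk (Ideal.span {x}) f) where
  isRegularLocalRing :=
    have := h.isRegularLocalRing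
    isRegularLocalRing_quotient_span_singleton hx hx2
  surjective := Ideal.quotientMap_surjective h.surjective
  ker_eq := by
    refine (Ideal.ker_quotient_lift _ _).trans ?_
    rw [← RingHom.comap_ker, Ideal.mk_ker,
      ← Set.image_singleton, ← Ideal.map_span, Ideal.comap_map_of_surjective φ h.surjective,
      ← RingHom.ker_eq_comap_bot, h.ker_eq, Ideal.map_sup, Ideal.map_quotient_self, bot_sup_eq,
      Ideal.map_span, Set.image_singleton]
  ne_zero := by rwa [Ne, Ideal.Quotient.eq_zero_iff_mem]
  not_isUnit := by
    have := isLocalRing_quotient_span_singleton hx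
    rw [← mem_nonunits_iff, ← mem_maximalIdeal,
      ← map_maximalIdeal_of_surjective (Ideal.Quotient.mk (Ideal.span {x}))
        Ideal.Quotient.mk_surjective]
    exact Ideal.mem_map_of_mem _ ((mem_maximalIdeal f).2 h.not_isUnit)

end IsHypersurfacePresentation

/-- `R` itself, and not only its completion, is a regular local ring modulo a nonzero nonunit.
Unlike the class of all hypersurfaces, this class is visibly stable under the general hyperplane
sections that drive the induction on the dimension. -/
def IsEmbeddedHypersurface (R : Type u) [CommRing R] : Prop :=
  ∃ (Q : Type u) (_ : CommRing Q) (φ : Q →+* R) (f : Q), IsHypersurfacePresentation φ f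

namespace IsEmbeddedHypersurface

variable {R : Type u} [CommRing R]

theorem isNoetherianRing (h : IsEmbeddedHypersurface R) : IsNoetherianRing R := by
  obtain ⟨Q, _, φ, f, h⟩ := h
  exact h.isNoetherianRing

theorem exists_quotient [IsLocalRing R] (h : IsEmbeddedHypersurface R)
    (hdim : 0 < ringKrullDim R) {S : Set (Ideal R)} (hS : S.Finite)
    (hprime : ∀ p ∈ S, p.IsPrime) (hmS : ∀ p ∈ S, ¬ maximalIdeal R ≤ p) :
    ∃ x ∈ maximalIdeal R, (∀ p ∈ S, x ∉ p) ∧ IsSMulRegular R x ∧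
      IsEmbeddedHypersurface (R ⧸ Ideal.span {x}) := by
  obtain ⟨Q, _, φ, f, h⟩ := h
  have := h.isRegularLocalRing
  have := isDomain_of_isRegularLocalRing Q
  obtain ⟨x, hx, hx2, hxS, hxf⟩ := h.exists_mem_forall_notMem hdim hS hprime hmS
  have := isRegularLocalRing_quotient_span_singleton hx hx2
  have hxprime : (Ideal.span {x}).IsPrime :=
    (Ideal.Quotient.isDomain_iff_prime _).1 (isDomain_of_isRegularLocalRing _)
  have hfx := h.notMem_span_singleton hx hxprime hxf
  have hx0 : x ≠ 0 := fun h0 ↦ hx2 (h0 ▸ Ideal.zero_mem _)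
  refine ⟨φ x, ?_, hxS, h.isSMulRegular_apply hx0 hxprime hfx, _, _, _, _, h.quotient hx hx2 hfx⟩
  rw [← map_maximalIdeal_of_surjective φ h.surjective]
  exact Ideal.mem_map_of_mem φ hx

theorem le_rdepth_self [IsLocalRing R] (h : IsEmbeddedHypersurface R) {n : ℕ}
    (hdim : ringKrullDim R = n) : n ≤ rdepth R R := by
  induction n generalizing R with
  | zero => simp
  | succ n ih =>
    have := h.isNoetherianRing
    obtain ⟨x, hx, -, hreg, hquot⟩ := h.exists_quotient (S := ∅)
      (by rw [hdim]; exact_mod_cast n.succ_pos) Set.finite_empty (by simp) (by simp)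
    have := isLocalRing_quotient_span_singleton hx
    refine succ_le_rdepth_iff.2 ⟨x, hx, hreg, ?_⟩
    rw [rdepth_congr (Submodule.quotEquivOfEq _ _ (smul_top_eq_span_singleton x)),
      rdepth_eq_of_surjective_algebraMap (S := R ⧸ Ideal.span {x}) Ideal.Quotient.mk_surjective]
    exact ih hquot (ringKrullDim_quotient_span_singleton_of_isSMulRegular hdim hx hreg)

end IsEmbeddedHypersurface

end Hypersurface

section Unmixed

variable {R : Type u} [CommRing R] [IsLocalRing R] [IsNoetherianRing R]
  {M : Type u} [AddCommGroup M] [Module R M] [Module.Finite R M]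

theorem exists_lt_mem_associatedPrimes_quotSMulTop {x : R} (hxmem : x ∈ maximalIdeal R)
    (hx : IsSMulRegular M x) {p : Ideal R} (hp : p ∈ associatedPrimes R M) :
    ∃ q ∈ associatedPrimes R (QuotSMulTop x M), p < q := by
  obtain ⟨v, hv, hvx⟩ : ∃ v ∈ Submodule.torsionBySet R M p, v ∉ x • (⊤ : Submodule R M) := by
    by_contra! hle
    have hbot : Submodule.torsionBySet R M p = ⊥ := by
      refine Submodule.eq_bot_of_le_smul_of_le_jacobson_bot (maximalIdeal R) _
        (IsNoetherian.noetherian _) (fun v hv ↦ ?_) (maximalIdeal_le_jacobson _)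
      obtain ⟨w, -, rfl⟩ := (Submodule.mem_smul_pointwise_iff_exists _ _ _).1 (hle v hv)
      refine Submodule.smul_mem_smul hxmem ((Submodule.mem_torsionBySet_iff _ _).2 fun a ↦ hx ?_)
      simpa [smul_comm x] using (Submodule.mem_torsionBySet_iff _ _).1 hv a
    obtain ⟨hprime, w, hw⟩ := isAssociatedPrime_iff.1 hp
    have hw0 : w ∈ Submodule.torsionBySet R M p :=
      (Submodule.mem_torsionBySet_iff _ _).2 fun a ↦ by simpa [hw] using a.2
    rw [hbot, Submodule.mem_bot] at hw0
    exact hprime.ne_top ((Ideal.eq_top_iff_one _).2 (by simp [hw, hw0]))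
  obtain ⟨q, hq, hle⟩ := exists_le_isAssociatedPrime_of_isNoetherianRing R
    (Submodule.Quotient.mk v : QuotSMulTop x M) (by rwa [Ne, Submodule.Quotient.mk_eq_zero])
  refine ⟨q, hq, lt_of_le_of_ne (fun a ha ↦ hle ?_) ?_⟩
  · rw [Submodule.mem_colon_singleton, Submodule.mem_bot, ← Submodule.Quotient.mk_smul,
      (Submodule.mem_torsionBySet_iff _ _).1 hv ⟨a, ha⟩, Submodule.Quotient.mk_zero]
  · rintro rfl
    refine isSMulRegular_iff_forall_notMem_associatedPrimes.1 hx p hp (hle ?_)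
    rw [Submodule.mem_colon_singleton, Submodule.mem_bot, ← Submodule.Quotient.mk_smul,
      Submodule.Quotient.mk_eq_zero]
    exact Submodule.smul_mem_pointwise_smul v x ⊤ trivial

theorem le_coheight_of_mem_associatedPrimes {n : ℕ} (h : n ≤ rdepth R M) {p : PrimeSpectrum R}
    (hp : p.asIdeal ∈ associatedPrimes R M) : n ≤ Order.coheight p := by
  induction n generalizing M p with
  | zero => simp
  | succ n ih =>
    obtain ⟨x, hxmem, hx, hdepth⟩ := succ_le_rdepth_iff.1 h
    obtain ⟨q, hq, hlt⟩ := exists_lt_mem_associatedPrimes_quotSMulTop hxmem hx hp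
    have := ih hdepth (p := ⟨q, hq.isPrime⟩) hq
    calc ((n + 1 : ℕ) : ℕ∞) ≤ Order.coheight (⟨q, hq.isPrime⟩ : PrimeSpectrum R) + 1 := by
          push_cast; gcongr
      _ ≤ Order.coheight p := Order.coheight_add_one_le hlt

theorem rdepth_le_ringKrullDim [Nontrivial M] : (rdepth R M : WithBot ℕ∞) ≤ ringKrullDim R := by
  obtain ⟨p, hp⟩ := associatedPrimes.nonempty R M
  refine le_trans ?_ (Order.coheight_le_krullDim (⟨p, hp.isPrime⟩ : PrimeSpectrum R))
  exact_mod_cast ENat.forall_natCast_le_iff_le.1 fun n hn ↦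
    le_coheight_of_mem_associatedPrimes hn hp

theorem isSMulRegular_of_forall_notMem_minimalPrimes {n : ℕ} (hdepth : n ≤ rdepth R R)
    (hdim : ringKrullDim R = n) {s : R} (hs : ∀ p ∈ minimalPrimes R, s ∉ p) :
    IsSMulRegular R s := by
  refine isSMulRegular_iff_forall_notMem_associatedPrimes.2 fun p hp hsp ↦ ?_
  have := hp.isPrime
  obtain ⟨q, hq, hqp⟩ := Ideal.exists_minimalPrimes_le (bot_le (a := p))
  obtain rfl | hlt := hqp.eq_or_lt
  · exact hs q hq hsp
  have hle : ((n + 1 : ℕ) : WithBot ℕ∞) ≤ ringKrullDim R := by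
    refine le_trans ?_ (Order.coheight_le_krullDim (⟨q, hq.1.1⟩ : PrimeSpectrum R))
    calc ((n + 1 : ℕ) : WithBot ℕ∞)
        ≤ (Order.coheight (⟨p, hp.isPrime⟩ : PrimeSpectrum R) + 1 : ℕ∞) := by
          have := le_coheight_of_mem_associatedPrimes hdepth (p := ⟨p, hp.isPrime⟩) hp
          exact_mod_cast add_le_add_left this 1
      _ ≤ Order.coheight (⟨q, hq.1.1⟩ : PrimeSpectrum R) := by
          exact_mod_cast Order.coheight_add_one_le (a := (⟨p, hp.isPrime⟩ : PrimeSpectrum R))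
            (b := ⟨q, hq.1.1⟩) hlt
  rw [hdim] at hle
  exact n.lt_irrefl (by exact_mod_cast hle)

end Unmixed

section IsoUpTo

theorem sum_smul_sum_smul_of_pairwise_mul_eq_zero {R M ι : Type*} [CommRing R] [AddCommGroup M]
    [Module R M] [Fintype ι] {e : ι → R} (he : Pairwise fun i j ↦ e i * e j = 0) (y : ι → ι → M) :
    ∑ i, e i • ∑ j, e j • y j i = ∑ i, e i • e i • y i i := by
  refine Finset.sum_congr rfl fun i _ ↦ ?_
  rw [Finset.smul_sum, Fintype.sum_eq_single i]
  exact fun j hji ↦ by rw [smul_smul, he hji.symm, zero_smul]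

theorem sum_pow_notMem_of_pairwise_mul_eq_zero {R ι : Type*} [CommRing R] [Fintype ι] {e : ι → R}
    (he : Pairwise fun i j ↦ e i * e j = 0) {p : Ideal R} [hp : p.IsPrime] {i : ι} (hi : e i ∉ p)
    {n : ℕ} (hn : n ≠ 0) : ∑ j, e j ^ n ∉ p := fun hmem ↦ by
  classical
  rw [← Finset.add_sum_erase _ _ (Finset.mem_univ i)] at hmem
  refine hi (hp.mem_of_pow_mem n
    ((Ideal.add_mem_iff_left p (Ideal.sum_mem _ fun j hj ↦ ?_)).1 hmem))
  have hij : e i * e j ∈ p := he (Finset.ne_of_mem_erase hj).symm ▸ p.zero_mem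
  exact p.pow_mem_of_mem ((hp.mem_or_mem hij).resolve_left hi) n (Nat.pos_of_ne_zero hn)

theorem exists_notMem_forall_mem_of_mem_minimalPrimes {R : Type*} [CommRing R]
    [IsNoetherianRing R] {p : Ideal R} (hp : p ∈ minimalPrimes R) :
    ∃ e ∉ p, ∀ q ∈ minimalPrimes R, q ≠ p → e ∈ q := by
  classical
  have hfin := minimalPrimes.finite_of_isNoetherianRing R
  have hle : ¬ (hfin.toFinset.erase p).inf id ≤ p := fun hle ↦ by
    obtain ⟨q, hq, hqp⟩ := (Ideal.IsPrime.inf_le' hp.1.1).1 hle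
    rw [Finset.mem_erase, hfin.mem_toFinset] at hq
    exact hq.1 (hqp.antisymm (hp.2 hq.2.1 hqp))
  obtain ⟨e, he, hep⟩ := Set.not_subset.1 hle
  exact ⟨e, hep, fun q hq hqp ↦
    Finset.inf_le (f := id) (Finset.mem_erase.2 ⟨hqp, hfin.mem_toFinset.2 hq⟩) he⟩

theorem exists_pairwise_mul_eq_zero_of_minimalPrimes (R : Type*) [CommRing R]
    [IsNoetherianRing R] : ∃ e : minimalPrimes R → R, (∀ p, e p ∉ p.1) ∧
      Pairwise fun p q ↦ e p * e q = 0 := by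
  choose e hep heq using fun p : minimalPrimes R ↦
    exists_notMem_forall_mem_of_mem_minimalPrimes p.2
  obtain ⟨n, hn⟩ := IsNoetherianRing.isNilpotent_nilradical R
  refine ⟨fun p ↦ e p ^ n, fun p hmem ↦ hep p (p.2.1.1.mem_of_pow_mem _ hmem), fun p q hpq ↦ ?_⟩
  have hmem : e p * e q ∈ nilradical R := by
    rw [nilradical, ← Ideal.sInf_minimalPrimes, Ideal.mem_sInf]
    intro p' hp'
    by_cases hpp' : p' = p.1
    · exact Ideal.mul_mem_left _ _ (heq q p' hp' fun h ↦ hpq (Subtype.ext (hpp'.symm.trans h)))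
    · exact Ideal.mul_mem_right _ _ (heq p p' hp' hpp')
  simpa only [hn, Submodule.zero_eq_bot, Ideal.mem_bot, mul_pow] using Ideal.pow_mem_pow hmem n

/-- The identification of `M / xM` with `(R / x) ⊗ M`, linear over `R / x`. -/
def quotSMulTopEquivTensor {R : Type*} [CommRing R] (x : R) (M : Type*) [AddCommGroup M]
    [Module R M] : QuotSMulTop x M ≃ₗ[R ⧸ Ideal.span {x}] (R ⧸ Ideal.span {x}) ⊗[R] M :=
  (QuotSMulTop.equivQuotTensor x M).extendScalarsOfSurjective Ideal.Quotient.mk_surjective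

/-- `M` and `N` are isomorphic up to multiplication by `s`: there are maps `M → N → M` both of whose
composites are multiplication by `s`. Having rank `r` is encoded below as being isomorphic to
`Fin r → R` up to a nonzerodivisor. -/
def IsoUpTo {R : Type*} [CommRing R] (s : R) (M N : Type*) [AddCommGroup M] [Module R M]
    [AddCommGroup N] [Module R N] : Prop :=
  ∃ (g : M →ₗ[R] N) (h : N →ₗ[R] M), (∀ m, h (g m) = s • m) ∧ ∀ n, g (h n) = s • n

namespace IsoUpTo

variable {R : Type*} [CommRing R] {s : R} {M N M' N' : Type*}
  [AddCommGroup M] [Module R M] [AddCommGroup N] [Module R N]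
  [AddCommGroup M'] [Module R M'] [AddCommGroup N'] [Module R N']

theorem nonempty_linearEquiv (h : IsoUpTo s M N) (hs : IsUnit s) : Nonempty (M ≃ₗ[R] N) := by
  obtain ⟨g, h, hhg, hgh⟩ := h
  obtain ⟨u, rfl⟩ := hs
  refine ⟨.ofLinearMap g ((↑u⁻¹ : R) • h) ?_ ?_⟩ <;> ext <;> simp [hhg, hgh, smul_smul]

theorem free_of_isArtinianRing [IsArtinianRing R] {ι : Type*} [Finite ι]
    (h : IsoUpTo s (ι → R) M) (hs : IsSMulRegular R s) : Module.Free R M := by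
  have hunit : IsUnit s := IsArtinianRing.isUnit_iff_mem_nonZeroDivisors.2
    (isLeftRegular_iff_isRegular.1 hs).mem_nonZeroDivisors
  obtain ⟨e⟩ := h.nonempty_linearEquiv hunit
  exact .of_equiv e

theorem mul_left (h : IsoUpTo s M N) (t : R) : IsoUpTo (t * s) M N := by
  obtain ⟨g, h, hhg, hgh⟩ := h
  exact ⟨t • g, h, fun m ↦ by simp [hhg, mul_smul], fun n ↦ by simp [hgh, mul_smul]⟩

theorem congr (h : IsoUpTo s M N) (eM : M ≃ₗ[R] M') (eN : N ≃ₗ[R] N') : IsoUpTo s M' N' := by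
  obtain ⟨g, h, hhg, hgh⟩ := h
  exact ⟨eN.toLinearMap ∘ₗ g ∘ₗ eM.symm.toLinearMap, eM.toLinearMap ∘ₗ h ∘ₗ eN.symm.toLinearMap,
    fun m ↦ by simp [hhg], fun n ↦ by simp [hgh]⟩

theorem baseChange (S : Type*) [CommRing S] [Algebra R S] (h : IsoUpTo s M N) :
    IsoUpTo (algebraMap R S s) (S ⊗[R] M) (S ⊗[R] N) := by
  obtain ⟨g, h, hhg, hgh⟩ := h
  have hg : h ∘ₗ g = s • LinearMap.id := LinearMap.ext hhg
  have hh : g ∘ₗ h = s • LinearMap.id := LinearMap.ext hgh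
  refine ⟨g.baseChange S, h.baseChange S, fun m ↦ ?_, fun n ↦ ?_⟩
  · rw [← LinearMap.comp_apply, ← LinearMap.baseChange_comp, hg]
    simp
  · rw [← LinearMap.comp_apply, ← LinearMap.baseChange_comp, hh]
    simp

theorem baseChange_pi (S : Type*) [CommRing S] [Algebra R S] {ι : Type*} [Finite ι]
    (h : IsoUpTo s (ι → R) M) : IsoUpTo (algebraMap R S s) (ι → S) (S ⊗[R] M) := by
  classical
  cases nonempty_fintype ι
  exact (h.baseChange S).congr (TensorProduct.piScalarRight R S S ι) (.refl S _)

theorem quotSMulTop (x : R) {ι : Type*} [Finite ι] (h : IsoUpTo s (ι → R) M) :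
    IsoUpTo (Ideal.Quotient.mk (Ideal.span {x}) s) (ι → R ⧸ Ideal.span {x}) (QuotSMulTop x M) :=
  (h.baseChange_pi (R ⧸ Ideal.span {x})).congr (.refl _ _) (quotSMulTopEquivTensor x M).symm

theorem quotient (h : IsoUpTo s M N) {H : Submodule R N}
    (hH : ∀ f : N →ₗ[R] M, H ≤ LinearMap.ker f) : IsoUpTo s M (N ⧸ H) := by
  obtain ⟨g, h, hhg, hgh⟩ := h
  refine ⟨H.mkQ ∘ₗ g, H.liftQ h (hH h), hhg, fun n ↦ ?_⟩
  obtain ⟨n, rfl⟩ := H.mkQ_surjective n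
  simp [hgh]

theorem sum_of_pairwise_mul_eq_zero {ι : Type*} [Fintype ι] {e : ι → R}
    (he : Pairwise fun i j ↦ e i * e j = 0) (h : ∀ i, IsoUpTo (e i) M N) :
    IsoUpTo (∑ i, e i ^ 3) M N := by
  choose g h hhg hgh using h
  refine ⟨∑ i, e i • g i, ∑ i, e i • h i, fun m ↦ ?_, fun n ↦ ?_⟩
  · simp only [LinearMap.sum_apply, LinearMap.smul_apply, map_sum, map_smul,
      sum_smul_sum_smul_of_pairwise_mul_eq_zero he, hhg]
    simp only [Finset.sum_smul, smul_smul, pow_succ, pow_zero, one_mul, mul_assoc]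
  · simp only [LinearMap.sum_apply, LinearMap.smul_apply, map_sum, map_smul,
      sum_smul_sum_smul_of_pairwise_mul_eq_zero he, hgh]
    simp only [Finset.sum_smul, smul_smul, pow_succ, pow_zero, one_mul, mul_assoc]

theorem exists_smul_comp_eq_smul_of_isLocalizedModule (S : Submonoid R) [Module.Finite R M]
    (f : M →ₗ[R] M') [IsLocalizedModule S f] {φ : M →ₗ[R] M} {s : R}
    (h : ∀ m, f (φ m) = s • f m) : ∃ t ∈ S, ∀ m, t • φ m = (t * s) • m := by
  obtain ⟨t, ht⟩ := Module.Finite.exists_smul_of_comp_eq_of_isLocalizedModule S f φ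
    (s • LinearMap.id) (LinearMap.ext fun m ↦ by simpa using h m)
  refine ⟨t, t.2, fun m ↦ ?_⟩
  rw [mul_smul]
  exact LinearMap.congr_fun ht m

theorem exists_of_isLocalizedModule (S : Submonoid R) [Module.FinitePresentation R M]
    [Module.FinitePresentation R N] (f : M →ₗ[R] M') (f' : N →ₗ[R] N') [IsLocalizedModule S f]
    [IsLocalizedModule S f'] (e : M' ≃ₗ[R] N') : ∃ s ∈ S, IsoUpTo s M N := by
  obtain ⟨g, s₁, hg⟩ := Module.FinitePresentation.exists_lift_of_isLocalizedModule S f'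
    (e.toLinearMap ∘ₗ f)
  obtain ⟨h, s₂, hh⟩ := Module.FinitePresentation.exists_lift_of_isLocalizedModule S f
    (e.symm.toLinearMap ∘ₗ f')
  replace hg (m) : f' (g m) = s₁ • e (f m) := LinearMap.congr_fun hg m
  replace hh (n) : f (h n) = s₂ • e.symm (f' n) := LinearMap.congr_fun hh n
  obtain ⟨t₁, ht₁S, ht₁⟩ := exists_smul_comp_eq_smul_of_isLocalizedModule S f (φ := h ∘ₗ g)
    (s := s₁ * s₂) fun m ↦ by simp [hg, hh, Submonoid.smul_def, smul_smul, mul_comm]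
  obtain ⟨t₂, ht₂S, ht₂⟩ := exists_smul_comp_eq_smul_of_isLocalizedModule S f' (φ := g ∘ₗ h)
    (s := s₁ * s₂) fun n ↦ by simp [hg, hh, Submonoid.smul_def, smul_smul]
  simp only [LinearMap.comp_apply] at ht₁ ht₂
  refine ⟨t₁ * t₂ * (s₁ * s₂), S.mul_mem (S.mul_mem ht₁S ht₂S) (s₁ * s₂).2, (t₁ * t₂) • g, h,
    fun m ↦ ?_, fun n ↦ ?_⟩
  · rw [LinearMap.smul_apply, map_smul, mul_comm t₁, mul_smul, ht₁, smul_smul, mul_assoc]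
  · rw [LinearMap.smul_apply, mul_smul, ht₂, smul_smul, mul_assoc]

theorem exists_of_forall_minimalPrimes [IsNoetherianRing R]
    (h : ∀ p ∈ minimalPrimes R, ∃ s ∉ p, IsoUpTo s M N) :
    ∃ s, (∀ p ∈ minimalPrimes R, s ∉ p) ∧ IsoUpTo s M N := by
  have := (minimalPrimes.finite_of_isNoetherianRing R).fintype
  choose s hs hiso using fun p : minimalPrimes R ↦ h p p.2
  obtain ⟨e, he, horth⟩ := exists_pairwise_mul_eq_zero_of_minimalPrimes R
  have horth' : Pairwise fun p q ↦ e p * s p * (e q * s q) = 0 := fun p q hpq ↦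
    (mul_mul_mul_comm _ _ _ _).trans (by rw [horth hpq, zero_mul])
  refine ⟨∑ p, (e p * s p) ^ 3, fun p hp hmem ↦ ?_,
    sum_of_pairwise_mul_eq_zero horth' fun p ↦ (hiso p).mul_left (e p)⟩
  have hprime := hp.1.1
  exact sum_pow_notMem_of_pairwise_mul_eq_zero horth'
    (hprime.mul_notMem (he ⟨p, hp⟩) (hs ⟨p, hp⟩)) three_ne_zero hmem

end IsoUpTo

theorem HasRank.exists_isoUpTo {R : Type u} [CommRing R] [IsNoetherianRing R] {M : Type u}
    [AddCommGroup M] [Module R M] [Module.Finite R M] (h : HasRank R M) :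
    ∃ (r : ℕ) (s : R), (∀ p ∈ minimalPrimes R, s ∉ p) ∧ IsoUpTo s (Fin r → R) M := by
  obtain ⟨r, h⟩ := h
  have := Module.finitePresentation_of_finite R M
  refine ⟨r, IsoUpTo.exists_of_forall_minimalPrimes fun p hp ↦ ?_⟩
  have hprime := hp.1.1
  obtain ⟨e⟩ := h p hprime hp
  exact IsoUpTo.exists_of_isLocalizedModule p.primeCompl
    (LinearMap.pi fun i ↦
      Algebra.linearMap R (Localization p.primeCompl) ∘ₗ LinearMap.proj i : (Fin r → R) →ₗ[R] _)
    (LocalizedModule.mkLinearMap p.primeCompl M) (e.restrictScalars R).symm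

end IsoUpTo

section IsExactPair

/-- The pair `(a, b)` is exact on the module `E`: everything killed by `a` is a multiple of `b`.
For a matrix factorization `(a, b)` acting on `F ⊗ X` this is the vanishing of a `Tor` module. -/
def IsExactPair {S : Type*} [Ring S] (a b : S) (E : Type*) [AddCommGroup E] [Module S E] : Prop :=
  ∀ v : E, a • v = 0 → ∃ w : E, b • w = v

namespace IsExactPair

variable {S : Type*} [Ring S] {a b : S} {E' E E'' : Type*} [AddCommGroup E'] [Module S E']
  [AddCommGroup E] [Module S E] [AddCommGroup E''] [Module S E'']

theorem of_leftInverse {i : E' →ₗ[S] E} {p : E →ₗ[S] E'} (hpi : Function.LeftInverse p i)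
    (h : IsExactPair a b E) : IsExactPair a b E' := fun v hv ↦ by
  obtain ⟨w, hw⟩ := h (i v) (by rw [← map_smul, hv, map_zero])
  exact ⟨p w, by rw [← map_smul, hw, hpi]⟩

theorem right_of_exact {i : E' →ₗ[S] E} {p : E →ₗ[S] E''} (hi : Function.Injective i)
    (hip : Function.Exact i p) (hp : Function.Surjective p) (hab : ∀ v : E, a • b • v = 0)
    (h' : IsExactPair a b E') (h : IsExactPair b a E) : IsExactPair b a E'' := fun v hv ↦ by
  obtain ⟨v, rfl⟩ := hp v
  obtain ⟨w, hw⟩ := (hip (b • v)).1 (by rw [map_smul, hv])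
  obtain ⟨u, rfl⟩ := h' w (hi (by rw [map_smul, hw, hab, map_zero]))
  obtain ⟨z, hz⟩ := h (v - i u) (by rw [smul_sub, ← map_smul, hw, sub_self])
  exact ⟨p z, by rw [← map_smul, hz, map_sub, hip.apply_apply_eq_zero, sub_zero]⟩

theorem middle_of_exact {i : E' →ₗ[S] E} {p : E →ₗ[S] E''} (hi : Function.Injective i)
    (hip : Function.Exact i p) (hp : Function.Surjective p) (hab : ∀ v : E, a • b • v = 0)
    (h' : IsExactPair a b E') (h'' : IsExactPair a b E'') : IsExactPair a b E := fun v hv ↦ by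
  obtain ⟨c, hc⟩ := h'' (p v) (by rw [← map_smul, hv, map_zero])
  obtain ⟨z, rfl⟩ := hp c
  obtain ⟨w, hw⟩ := (hip (v - b • z)).1 (by rw [map_sub, map_smul, hc, sub_self])
  obtain ⟨u, rfl⟩ := h' w (hi (by rw [map_smul, hw, smul_sub, hv, hab, sub_zero, map_zero]))
  exact ⟨z + i u, by rw [smul_add, ← map_smul, hw, add_sub_cancel]⟩

end IsExactPair

theorem ker_eq_range_of_ker_eq_range {R E : Type*} [Ring R] [AddCommGroup E] [Module R E]
    [IsArtinian R E] [IsNoetherian R E] {α β : E →ₗ[R] E} (hαβ : α ∘ₗ β = 0)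
    (h : LinearMap.ker β = LinearMap.range α) : LinearMap.ker α = LinearMap.range β := by
  have hlength (γ : E →ₗ[R] E) : Module.length R E =
      Module.length R (LinearMap.ker γ) + Module.length R (LinearMap.range γ) :=
    Module.length_eq_add_of_exact (LinearMap.ker γ).subtype γ.rangeRestrict
      (Submodule.subtype_injective _) γ.surjective_rangeRestrict fun y ↦ by
        rw [← LinearMap.mem_ker, LinearMap.ker_rangeRestrict]
        simp
  have hle : LinearMap.range β ≤ LinearMap.ker α := LinearMap.range_le_ker_iff.2 hαβ
  have heq := (hlength α).symm.trans (hlength β)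
  rw [h, add_comm, Module.length_submodule, Module.length_submodule, Module.length_submodule] at heq
  have hheight := WithTop.add_left_cancel (Submodule.height_lt_top (LinearMap.range α)).ne heq
  exact (hle.eq_of_not_lt fun hlt ↦ (Submodule.height_strictMono hlt).ne' hheight).symm

theorem IsExactPair.symm_of_isArtinian {S : Type*} [Ring S] {a b : S} (R : Type*) {E : Type*}
    [Ring R] [AddCommGroup E] [Module S E] [Module R E] [SMulCommClass S R E] [IsArtinian R E]
    [IsNoetherian R E] (hab : ∀ v : E, a • b • v = 0) (hba : ∀ v : E, b • a • v = 0)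
    (h : IsExactPair b a E) : IsExactPair a b E := by
  have hker : LinearMap.ker (Module.toModuleEnd R E b) =
      LinearMap.range (Module.toModuleEnd R E a) :=
    le_antisymm h (by rintro _ ⟨w, rfl⟩; exact hba w)
  exact (ker_eq_range_of_ker_eq_range (LinearMap.ext hab) hker).le

theorem IsExactPair.middle_of_exact_of_isArtinian {S : Type*} [Ring S] {a b : S} (R : Type*)
    {E' E E'' : Type*} [AddCommGroup E'] [Module S E'] [AddCommGroup E] [Module S E]
    [AddCommGroup E''] [Module S E''] {i : E' →ₗ[S] E} {p : E →ₗ[S] E''} [Ring R] [Module R E'']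
    [SMulCommClass S R E''] [IsArtinian R E''] [IsNoetherian R E''] (hi : Function.Injective i)
    (hip : Function.Exact i p) (hp : Function.Surjective p) (hab : ∀ v : E, a • b • v = 0)
    (hba : ∀ v : E, b • a • v = 0) (h' : IsExactPair a b E') (h : IsExactPair b a E) :
    IsExactPair a b E :=
  h'.middle_of_exact hi hip hp hab <| (h'.right_of_exact hi hip hp hab h).symm_of_isArtinian R
    (hp.forall.2 fun v ↦ by rw [← map_smul, ← map_smul, hab, map_zero])
    (hp.forall.2 fun v ↦ by rw [← map_smul, ← map_smul, hba, map_zero])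

section Quotient

variable {S Q : Type*} [Ring S] [CommRing Q] {a b : S} {E E'' : Type*} [AddCommGroup E]
  [Module S E] [Module Q E] [AddCommGroup E''] [Module S E'']
  {p : E →ₗ[S] E''} {z : Q}

theorem isExactPair_iff_of_surjective (hp : Function.Surjective p)
    (hker : ∀ v, p v = 0 ↔ ∃ w, z • w = v) : IsExactPair a b E'' ↔
      ∀ v w : E, a • v = z • w → ∃ u u' : E, v = b • u + z • u' := by
  refine ⟨fun h v w hvw ↦ ?_, fun h v hv ↦ ?_⟩
  · obtain ⟨c, hc⟩ := h (p v) (by rw [← map_smul, hker]; exact ⟨w, hvw.symm⟩)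
    obtain ⟨u, rfl⟩ := hp c
    obtain ⟨u', hu'⟩ := (hker (v - b • u)).1 (by rw [map_sub, map_smul, hc, sub_self])
    exact ⟨u, u', by rw [hu', add_sub_cancel]⟩
  · obtain ⟨v, rfl⟩ := hp v
    obtain ⟨w, hw⟩ := (hker (a • v)).1 (by rw [map_smul, hv])
    obtain ⟨u, u', rfl⟩ := h v w hw.symm
    exact ⟨p u, by rw [map_add, (hker (z • u')).2 ⟨u', rfl⟩, add_zero, map_smul]⟩

theorem isExactPair_of_mul_eq_smul (hp : Function.Surjective p)
    (hker : ∀ v, p v = 0 ↔ ∃ w, z • w = v) (hz : IsSMulRegular E z)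
    (hab : ∀ v : E, a • b • v = z • v) (hba : ∀ v : E, b • a • v = z • v) :
    IsExactPair a b E'' := by
  refine (isExactPair_iff_of_surjective hp hker).2 fun v w hvw ↦ ⟨w, 0, ?_⟩
  rw [← hab] at hvw
  rw [smul_zero, add_zero]
  exact hz (by simpa only [hba] using congrArg (b • ·) hvw)

end Quotient

section PowerOfRegular

variable {S Q : Type*} [Ring S] [CommRing Q] {a b : S} {E : Type*} [AddCommGroup E]
  [Module S E] [Module Q E] [SMulCommClass Q S E] {t u : Q} {e : ℕ}

/-- If `t ^ (c - j) • v` comes from `b` modulo `t ^ c`, then subtracting a multiple of `t ^ j` from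
`v` makes `a • v` divisible by one more power of `t`, as `a * b` is divisible by `t ^ (c + 1)`. -/
theorem exists_smul_eq_pow_smul_of_forall_smul_eq_pow_smul (ht : IsSMulRegular E t)
    (hab : ∀ v : E, a • b • v = (u * t ^ (e + 1)) • v) {c : ℕ} (hce : c ≤ e)
    (h : ∀ v w : E, a • v = t ^ c • w → ∃ z z' : E, v = b • z + t ^ c • z')
    {v w : E} (hv : a • v = t • w) {j : ℕ} (hj : j < c) :
    ∃ v' z w' : E, v = v' + t • z ∧ a • v' = t ^ (j + 1) • w' := by
  induction j with
  | zero => exact ⟨v, 0, w, by simp, by simpa using hv⟩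
  | succ j ih =>
    obtain ⟨v', z, w', rfl, hv'⟩ := ih (by lia)
    obtain ⟨y, y', hy⟩ := h (t ^ (c - (j + 1)) • v') w' (by
      rw [← smul_comm, hv', smul_smul, ← pow_add, Nat.sub_add_cancel hj.le])
    have hkey : t ^ (c - (j + 1)) • a • (v' - t ^ (j + 1) • y') =
        t ^ (c - (j + 1)) • (u * t ^ (e + 1 - c + (j + 1))) • y := by
      have hpow : t ^ (c - (j + 1)) * t ^ (e + 1 - c + (j + 1)) = t ^ (e + 1) := by
        rw [← pow_add]; congr 1; lia
      rw [smul_comm, smul_sub, hy, smul_smul, ← pow_add, Nat.sub_add_cancel hj.le,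
        add_sub_cancel_right, hab, smul_smul, mul_left_comm, hpow]
    refine ⟨v' - t ^ (j + 1) • y', z + t ^ j • y', (u * t ^ (e - c)) • y, ?_, ?_⟩
    · rw [smul_add, smul_smul, ← pow_succ']; abel
    · rw [ht.pow _ hkey, smul_smul]
      congr 1
      rw [mul_left_comm, ← pow_add]; congr 2; lia

theorem exists_eq_smul_add_pow_smul_of_smul_eq_smul (ht : IsSMulRegular E t)
    (hab : ∀ v : E, a • b • v = (u * t ^ (e + 1)) • v) {c : ℕ} (hc : c ≠ 0) (hce : c ≤ e)
    (h : ∀ v w : E, a • v = t ^ c • w → ∃ z z' : E, v = b • z + t ^ c • z')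
    {v w : E} (hvw : t • v = a • w) : ∃ z z' : E, v = a • z + t ^ e • z' := by
  obtain ⟨c, rfl⟩ := Nat.exists_eq_succ_of_ne_zero hc
  obtain ⟨w', y, x, rfl, hx⟩ := exists_smul_eq_pow_smul_of_forall_smul_eq_pow_smul ht hab hce h
    hvw.symm (Nat.lt_succ_self c)
  obtain ⟨z, z', rfl⟩ := h w' x hx
  refine ⟨t ^ c • z' + y, u • z, ht ?_⟩
  have hbz : t • u • t ^ e • z = a • b • z := by
    rw [hab, smul_smul, smul_smul, pow_succ']; congr 1; ring
  change t • v = t • (a • (t ^ c • z' + y) + t ^ e • u • z)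
  rw [hvw, smul_add a, smul_add a, smul_add t, smul_comm t a, smul_add t, smul_add a,
    smul_comm (t ^ e) u, hbz, smul_smul t, ← pow_succ']
  abel

end PowerOfRegular

end IsExactPair

section MatrixFactorization

/-- A matrix factorization of `f` in coordinate-free form: two endomorphisms of `F` whose composites
in both orders are multiplication by `f`. -/
structure IsMatrixFactorization {Q F : Type*} [CommRing Q] [AddCommGroup F] [Module Q F] (f : Q)
    (a b : Module.End Q F) : Prop where
  smul_smul_left (v : F) : a • b • v = f • v
  smul_smul_right (v : F) : b • a • v = f • v

variable {Q F : Type*} [CommRing Q] [AddCommGroup F] [Module Q F]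

theorem lTensor_eq_zero_iff {X Y : Type*} [AddCommGroup X] [Module Q X] [AddCommGroup Y]
    [Module Q Y] {g : X →ₗ[Q] Y} (hg : Function.Surjective g) {z : Q}
    (hker : ∀ x, g x = 0 ↔ ∃ x', z • x' = x) (v : F ⊗[Q] X) :
    LinearMap.lTensor F g v = 0 ↔ ∃ w, z • w = v := by
  have hexact : Function.Exact (z • LinearMap.id : X →ₗ[Q] X) g := hker
  rw [lTensor_exact F hexact hg v, LinearMap.lTensor_smul, LinearMap.lTensor_id]
  rfl

theorem rTensor_eq_zero_iff {N : Type*} [AddCommGroup N] [Module Q N] {a : Module.End Q F}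
    {p : F →ₗ[Q] N} (hp : Function.Surjective p) (hap : LinearMap.range a = LinearMap.ker p)
    (X : Type*) [AddCommGroup X] [Module Q X] (v : F ⊗[Q] X) :
    LinearMap.rTensor X p v = 0 ↔ ∃ w : F ⊗[Q] X, a • w = v := by
  simp only [TensorProduct.AlgebraTensorModule.smul_eq_lsmul_rTensor]
  exact rTensor_exact X (LinearMap.exact_iff.2 hap.symm) hp v

theorem exists_isMatrixFactorization [IsDomain Q] [IsNoetherianRing Q] [Module.Free Q F]
    [Module.Finite Q F] (K : Submodule Q F) [Module.Free Q K] {f : Q} (hf : f ≠ 0)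
    (hK : ∀ v, f • v ∈ K) :
    ∃ a b : Module.End Q F, IsMatrixFactorization f a b ∧ LinearMap.range a = K := by
  let m : F →ₗ[Q] K := LinearMap.codRestrict K (f • LinearMap.id) hK
  have hm : Function.Injective m := fun v w hvw ↦
    smul_right_injective F hf (congrArg Subtype.val hvw)
  let e : F ≃ₗ[Q] K := LinearEquiv.ofFinrankEq F K
    ((LinearMap.finrank_le_finrank_of_injective hm).antisymm
      (LinearMap.finrank_le_finrank_of_injective K.subtype_injective))
  have hinj : Function.Injective (K.subtype ∘ₗ e.toLinearMap) :=
    K.subtype_injective.comp e.injective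
  have hab (v : F) : (K.subtype ∘ₗ e.toLinearMap) ((e.symm.toLinearMap ∘ₗ m) v) = f • v :=
    congrArg Subtype.val (e.apply_symm_apply (m v))
  refine ⟨K.subtype ∘ₗ e.toLinearMap, e.symm.toLinearMap ∘ₗ m, ⟨hab, fun v ↦ hinj ?_⟩, ?_⟩
  · exact (hab _).trans (map_smul _ f v).symm
  · rw [LinearMap.range_comp_of_range_eq_top _ e.range, Submodule.range_subtype]

namespace IsMatrixFactorization

variable {f : Q} {a b : Module.End Q F}

theorem symm (h : IsMatrixFactorization f a b) : IsMatrixFactorization f b a :=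
  ⟨h.smul_smul_right, h.smul_smul_left⟩

variable {X Y : Type*} [AddCommGroup X] [Module Q X] [AddCommGroup Y] [Module Q Y]

theorem tensor_smul_smul (h : IsMatrixFactorization f a b) (v : F ⊗[Q] X) :
    a • b • v = f • v := by
  induction v with
  | zero => simp only [smul_zero]
  | tmul x y => simp only [TensorProduct.smul_tmul', h.smul_smul_left]
  | add v w hv hw => simp only [smul_add, hv, hw]

theorem isExactPair_tensor [Module.Flat Q F] (h : IsMatrixFactorization f a b) {g : X →ₗ[Q] Y}
    (hg : Function.Surjective g) (hker : ∀ x, g x = 0 ↔ ∃ x', f • x' = x)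
    (hf : IsSMulRegular X f) : IsExactPair a b (F ⊗[Q] Y) :=
  isExactPair_of_mul_eq_smul
    (p := TensorProduct.AlgebraTensorModule.lTensor (Module.End Q F) F g)
    (LinearMap.lTensor_surjective F hg) (lTensor_eq_zero_iff hg hker) (hf.lTensor F)
    h.tensor_smul_smul h.symm.tensor_smul_smul

end IsMatrixFactorization

/-- If `b • v = 0`, then `s • v` comes from `a` by exactness on the module `P`, so `s` kills the
image of `v` in `N ⊗ M`. -/
theorem isExactPair_of_isoUpTo {P M N : Type*} [AddCommGroup P] [Module Q P] [AddCommGroup M]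
    [Module Q M] [AddCommGroup N] [Module Q N] {a b : Module.End Q F} {p : F →ₗ[Q] N}
    (hp : Function.Surjective p) (hap : LinearMap.range a = LinearMap.ker p) {s : Q}
    (hM : IsoUpTo s P M) (hs : IsSMulRegular (N ⊗[Q] M) s) (hP : IsExactPair b a (F ⊗[Q] P)) :
    IsExactPair b a (F ⊗[Q] M) := fun v hv ↦ by
  obtain ⟨g, h, -, hgh⟩ := hM
  let G := TensorProduct.AlgebraTensorModule.lTensor (Module.End Q F) F g
  let H := TensorProduct.AlgebraTensorModule.lTensor (Module.End Q F) F h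
  obtain ⟨w, hw⟩ := hP (H v) (by rw [← map_smul, hv, map_zero])
  have hGH : G (H v) = s • v := by
    change LinearMap.lTensor F g (LinearMap.lTensor F h v) = s • v
    rw [← LinearMap.comp_apply, ← LinearMap.lTensor_comp, show g ∘ₗ h = s • LinearMap.id from
      LinearMap.ext hgh, LinearMap.lTensor_smul, LinearMap.lTensor_id]
    rfl
  rw [← rTensor_eq_zero_iff hp hap M]
  refine hs.right_eq_zero_of_smul ?_
  rw [← map_smul, rTensor_eq_zero_iff hp hap M]
  exact ⟨G w, by rw [← map_smul, hw, hGH]⟩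

end MatrixFactorization

section Syzygy

theorem free_of_free_quotSMulTop {R M : Type*} [CommRing R] [IsLocalRing R] [IsNoetherianRing R]
    [AddCommGroup M] [Module R M] [Module.Finite R M] {x : R} (hx : x ∈ maximalIdeal R)
    (hreg : IsSMulRegular M x) (h : Module.Free (R ⧸ Ideal.span {x}) (QuotSMulTop x M)) :
    Module.Free R M :=
  have := Module.finitePresentation_of_finite R M
  (Module.free_quotSMulTop_iff_free R M (maximalIdeal_le_jacobson _ hx) hreg).1 h

variable {Q : Type*} [CommRing Q] [IsNoetherianRing Q] [IsLocalRing Q] [IsDomain Q] {x : Q}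
  [IsDomain (Q ⧸ Ideal.span {x})] [IsPrincipalIdealRing (Q ⧸ Ideal.span {x})] {F N : Type*}
  [AddCommGroup F] [Module Q F] [Module.Free Q F] [Module.Finite Q F] [AddCommGroup N] [Module Q N]

theorem free_ker_of_isSMulRegular (hx0 : x ≠ 0) (hx : x ∈ maximalIdeal Q) (hN : IsSMulRegular N x)
    (p : F →ₗ[Q] N) : Module.Free Q (LinearMap.ker p) := by
  refine free_of_free_quotSMulTop hx ((IsSMulRegular.of_ne_zero hx0).submodule _ _) ?_
  have : Module.Finite (Q ⧸ Ideal.span {x}) (QuotSMulTop x (LinearMap.ker p)) :=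
    Module.Finite.of_restrictScalars_finite Q _ _
  rw [Module.free_iff_isTorsionFree]
  let i : QuotSMulTop x (LinearMap.ker p) →ₗ[Q ⧸ Ideal.span {x}] QuotSMulTop x F :=
    (QuotSMulTop.map x (LinearMap.ker p).subtype).extendScalarsOfSurjective
      Ideal.Quotient.mk_surjective
  have hi : Function.Injective i := by
    refine (injective_iff_map_eq_zero i).2 fun v hv ↦ ?_
    obtain ⟨⟨v, hpv⟩, rfl⟩ := Submodule.Quotient.mk_surjective _ v
    obtain ⟨w, rfl⟩ := mk_eq_zero_iff_exists_eq_smul.1 hv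
    have hpw : p w = 0 := hN.right_eq_zero_of_smul (by rw [← map_smul]; exact hpv)
    exact mk_eq_zero_iff_exists_eq_smul.2 ⟨⟨w, hpw⟩, rfl⟩
  exact hi.moduleIsTorsionFree i (map_smul i)

theorem exists_isMatrixFactorization_of_isSMulRegular [Module.Finite Q N] {f : Q} (hx0 : x ≠ 0)
    (hx : x ∈ maximalIdeal Q) (hN : IsSMulRegular N x) (hf : f ≠ 0) (hfN : ∀ v : N, f • v = 0) :
    ∃ (k : ℕ) (a b : Module.End Q (Fin k → Q)) (p : (Fin k → Q) →ₗ[Q] N),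
      IsMatrixFactorization f a b ∧ Function.Surjective p ∧
        LinearMap.range a = LinearMap.ker p := by
  obtain ⟨k, p, hp⟩ := Module.Finite.exists_fin' Q N
  have := free_ker_of_isSMulRegular hx0 hx hN p
  obtain ⟨a, b, hab, hap⟩ := exists_isMatrixFactorization (LinearMap.ker p) hf fun v ↦ by
    rw [LinearMap.mem_ker, map_smul, hfN]
  exact ⟨k, a, b, p, hab, hp, hap⟩

end Syzygy

section DimensionOne

variable {R : Type*} [CommRing R] [IsLocalRing R] [Ring.KrullDimLE 1 R] {s : R}

theorem eq_maximalIdeal_of_isSMulRegular (hs : IsSMulRegular R s) {p : Ideal R} (hp : p.IsPrime)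
    (hsp : s ∈ p) : p = maximalIdeal R := by
  refine (Ring.krullDimLE_one_iff.1 inferInstance p hp).elim (fun hmin ↦ ?_) eq_maximalIdeal
  exact absurd (isLeftRegular_iff_isRegular.1 hs).mem_nonZeroDivisors
    (Set.disjoint_left.1 (Ideal.disjoint_nonZeroDivisors_of_mem_minimalPrimes hmin) hsp)

variable [IsNoetherianRing R] {M : Type*} [AddCommGroup M] [Module R M]

theorem isSMulRegular_of_maximalIdeal_notMem_associatedPrimes (hs : IsSMulRegular R s)
    (hM : maximalIdeal R ∉ associatedPrimes R M) : IsSMulRegular M s :=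
  isSMulRegular_iff_forall_notMem_associatedPrimes.2 fun _ hp hsp ↦
    hM (eq_maximalIdeal_of_isSMulRegular hs hp.isPrime hsp ▸ hp)

theorem isArtinian_of_smul_eq_zero [Module.Finite R M] (hs : IsSMulRegular R s)
    (hM : ∀ v : M, s • v = 0) : IsArtinian R M := by
  by_cases hunit : IsUnit s
  · have : Subsingleton M := ⟨fun v w ↦ hunit.smul_left_cancel.1 (by rw [hM, hM])⟩
    infer_instance
  have hmin : maximalIdeal R ∈ (Ideal.span {s}).minimalPrimes :=
    ⟨⟨inferInstance, (Ideal.span_singleton_le_iff_mem _).2 hunit⟩, fun p hp _ ↦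
      (eq_maximalIdeal_of_isSMulRegular hs hp.1 (hp.2 (Ideal.mem_span_singleton_self s))).ge⟩
  have := quotient_artinian_of_mem_minimalPrimes_of_isLocalRing _ hmin
  have htors : Module.IsTorsionBySet R M (Ideal.span {s} : Ideal R) :=
    (Module.isTorsionBySet_span_singleton_iff s).2 hM
  let := htors.module
  have : IsScalarTower R (R ⧸ Ideal.span {s}) M := htors.isScalarTower
  have : Module.Finite (R ⧸ Ideal.span {s}) M := Module.Finite.of_restrictScalars_finite R _ M
  exact isArtinian_of_surjective_algebraMap (S := R) (R := R ⧸ Ideal.span {s})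
    Ideal.Quotient.mk_surjective

end DimensionOne

section Tensor

theorem isArtinian_tensorProduct (Q F C : Type*) [CommRing Q] [AddCommGroup F] [Module Q F]
    [Module.Free Q F] [Module.Finite Q F] [AddCommGroup C] [Module Q C] [IsArtinian Q C] :
    IsArtinian Q (F ⊗[Q] C) := by
  classical
  have e := TensorProduct.equivFinsuppOfBasisLeft (N := C) (Module.Free.chooseBasis Q F) ≪≫ₗ
    Finsupp.linearEquivFunOnFinite Q C _
  exact isArtinian_of_linearEquiv e.symm

theorem smul_tensorProduct_eq_zero {Q F M : Type*} [CommRing Q] [AddCommGroup F] [Module Q F]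
    [AddCommGroup M] [Module Q M] {f : Q} (hf : ∀ v : M, f • v = 0) (v : F ⊗[Q] M) : f • v = 0 := by
  induction v with
  | zero => exact smul_zero f
  | tmul x y => rw [← TensorProduct.tmul_smul, hf, TensorProduct.tmul_zero]
  | add v w hv hw => rw [smul_add, hv, hw, add_zero]

theorem IsMatrixFactorization.isExactPair_tensor_of_exact {Q F P M C : Type*} [CommRing Q]
    [IsNoetherianRing Q] [AddCommGroup F] [Module Q F] [Module.Free Q F] [Module.Finite Q F]
    {f : Q} {a b : Module.End Q F} (hab : IsMatrixFactorization f a b) [AddCommGroup P] [Module Q P]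
    [AddCommGroup M] [Module Q M] [AddCommGroup C] [Module Q C] [IsArtinian Q C] [Module.Finite Q C]
    {g : P →ₗ[Q] M} {q : M →ₗ[Q] C} (hg : Function.Injective g) (hgq : Function.Exact g q)
    (hq : Function.Surjective q) (hf : ∀ v : M, f • v = 0) (hP : IsExactPair a b (F ⊗[Q] P))
    (hM : IsExactPair b a (F ⊗[Q] M)) : IsExactPair a b (F ⊗[Q] M) := by
  have := isArtinian_tensorProduct Q F C
  have : IsNoetherian Q (F ⊗[Q] C) := isNoetherian_of_isNoetherianRing_of_finite Q _
  refine hP.middle_of_exact_of_isArtinian Q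
    (i := TensorProduct.AlgebraTensorModule.lTensor (Module.End Q F) F g)
    (p := TensorProduct.AlgebraTensorModule.lTensor (Module.End Q F) F q)
    (Module.Flat.lTensor_preserves_injective_linearMap g hg) (lTensor_exact F hgq hq)
    (LinearMap.lTensor_surjective F hq) (fun v ↦ ?_) (fun v ↦ ?_) hM
  · rw [hab.tensor_smul_smul, smul_tensorProduct_eq_zero hf]
  · rw [hab.symm.tensor_smul_smul, smul_tensorProduct_eq_zero hf]

variable {Q R : Type*} [CommRing Q] [CommRing R] [Algebra Q R] {f : Q} {F M : Type*}
  [AddCommGroup F] [Module Q F] {a b : Module.End Q F} [AddCommGroup M] [Module R M] [Module Q M]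
  [IsScalarTower Q R M]

theorem IsoUpTo.restrictScalars {s : Q} {P : Type*} [AddCommGroup P] [Module R P] [Module Q P]
    [IsScalarTower Q R P] (h : IsoUpTo (algebraMap Q R s) P M) : IsoUpTo s P M := by
  obtain ⟨g, h, hhg, hgh⟩ := h
  exact ⟨g.restrictScalars Q, h.restrictScalars Q,
    fun v ↦ (hhg v).trans (algebraMap_smul R s v), fun v ↦ (hgh v).trans (algebraMap_smul R s v)⟩

namespace IsHypersurfacePresentation

variable (h : IsHypersurfacePresentation (algebraMap Q R) f)
include h

theorem isExactPair_tensor_pi [IsDomain Q] [Module.Flat Q F] (hab : IsMatrixFactorization f a b)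
    (r : ℕ) : IsExactPair a b (F ⊗[Q] (Fin r → R)) := by
  refine hab.isExactPair_tensor (X := Fin r → Q) (g := (Algebra.linearMap Q R).compLeft (Fin r))
    h.surjective.comp_left (fun v ↦ ⟨fun hv ↦ ?_, ?_⟩) (IsSMulRegular.of_ne_zero h.ne_zero)
  · choose w hw using fun i ↦ h.apply_eq_zero_iff.1 (congrFun hv i)
    exact ⟨w, funext fun i ↦ (hw i).symm⟩
  · rintro ⟨w, rfl⟩
    exact funext fun i ↦ h.apply_eq_zero_iff.2 (dvd_mul_right f (w i))

theorem smul_eq_zero (v : M) : f • v = 0 := by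
  rw [← algebraMap_smul R, h.apply_eq_zero_iff.2 dvd_rfl, zero_smul]

/-- Multiplication by `s` embeds a free module `R ^ r` in `M` with a cokernel of finite length, and
on modules of finite length exactness of `(b, a)` implies that of `(a, b)`. -/
theorem isExactPair_tensor_of_isoUpTo [IsDomain Q] [Ring.KrullDimLE 1 R] [Module.Free Q F]
    [Module.Finite Q F] (hab : IsMatrixFactorization f a b) [Module.Finite R M] {r : ℕ} {s : R}
    (hs : IsSMulRegular R s) (hM : IsoUpTo s (Fin r → R) M)
    (hba : IsExactPair b a (F ⊗[Q] M)) : IsExactPair a b (F ⊗[Q] M) := by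
  have := h.isRegularLocalRing
  have := h.isNoetherianRing
  have := h.isLocalRing
  obtain ⟨g, g', hg'g, hgg'⟩ := hM
  have hg : Function.Injective g := (injective_iff_map_eq_zero g).2 fun v hv ↦ by
    refine funext fun i ↦ hs.right_eq_zero_of_smul ?_
    rw [← Pi.smul_apply, ← hg'g, hv, map_zero, Pi.zero_apply]
  have : IsArtinian R (M ⧸ LinearMap.range g) := isArtinian_of_smul_eq_zero hs fun c ↦ by
    obtain ⟨v, rfl⟩ := Submodule.Quotient.mk_surjective _ c
    exact (Submodule.Quotient.mk_eq_zero _).2 ⟨g' v, hgg' v⟩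
  have : IsArtinian Q (M ⧸ LinearMap.range g) := isArtinian_of_surjective_algebraMap h.surjective
  have : Module.Finite Q R := .of_surjective (Algebra.linearMap Q R) h.surjective
  have : Module.Finite Q (M ⧸ LinearMap.range g) := .trans R _
  exact hab.isExactPair_tensor_of_exact (g := g.restrictScalars Q)
    (q := (LinearMap.range g).mkQ.restrictScalars Q) hg (LinearMap.exact_map_mkQ_range g)
    (Submodule.mkQ_surjective (LinearMap.range g)) h.smul_eq_zero (h.isExactPair_tensor_pi hab r)
    hba

end IsHypersurfacePresentation

end Tensor

section DiscreteValuationRing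

theorem IsExactPair.pi {S ι : Type*} [Ring S] {a b : S} {E : ι → Type*} [∀ i, AddCommGroup (E i)]
    [∀ i, Module S (E i)] (h : ∀ i, IsExactPair a b (E i)) : IsExactPair a b (∀ i, E i) :=
  fun v hv ↦ by
    choose w hw using fun i ↦ h i (v i) (congrFun hv i)
    exact ⟨w, funext hw⟩

variable {V : Type*} [CommRing V] {t : V}

theorem isExactPair_quotient_span_pow (ht : IsSMulRegular V t) {e c : ℕ} (hec : e < c) :
    IsExactPair t (t ^ e) (V ⧸ Ideal.span {t ^ c}) := fun v hv ↦ by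
  obtain ⟨v, rfl⟩ := Ideal.Quotient.mk_surjective v
  obtain ⟨w, hw⟩ : t ^ c ∣ t * v :=
    Ideal.mem_span_singleton.1 (Ideal.Quotient.eq_zero_iff_mem.1 hv)
  obtain ⟨d, rfl⟩ := Nat.exists_eq_add_of_lt hec
  have hv' : v = t ^ e * (t ^ d * w) := ht (by
    change t * v = t * _
    rw [hw]; ring)
  exact ⟨Ideal.Quotient.mk _ (t ^ d * w), by rw [hv', map_mul]; rfl⟩

theorem exists_leftInverse_or_isExactPair [IsDomain V] [IsDiscreteValuationRing V]
    (ht : Irreducible t) {Y : Type*} [AddCommGroup Y] [Module V Y] [Module.Finite V Y]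
    (hY : Module.IsTorsion V Y) (e : ℕ) :
    (∃ c ≠ 0, c ≤ e ∧ ∃ (i : (V ⧸ Ideal.span {t ^ c}) →ₗ[V] Y)
      (p : Y →ₗ[V] V ⧸ Ideal.span {t ^ c}), Function.LeftInverse p i) ∨
    IsExactPair t (t ^ e) Y := by
  classical
  obtain ⟨ι, _, q, hq, c, ⟨φ⟩⟩ := Module.equiv_directSum_of_isTorsion hY
  have hspan (i : ι) : V ∙ q i ^ c i = Ideal.span {t ^ c i} :=
    Ideal.span_singleton_eq_span_singleton.2
      ((IsDiscreteValuationRing.associated_of_irreducible V (hq i) ht).pow_pow)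
  let ψ := φ ≪≫ₗ DirectSum.linearEquivFunOnFintype V ι _ ≪≫ₗ
    LinearEquiv.piCongrRight fun i ↦ Submodule.quotEquivOfEq _ _ (hspan i)
  by_cases hc : ∃ i, c i ≠ 0 ∧ c i ≤ e
  · obtain ⟨i, hi, hie⟩ := hc
    refine .inl ⟨c i, hi, hie,
      ψ.symm.toLinearMap ∘ₗ LinearMap.single V (fun j ↦ V ⧸ Ideal.span {t ^ c j}) i,
      LinearMap.proj i ∘ₗ ψ.toLinearMap, fun v ↦ ?_⟩
    simp
  · push Not at hc
    refine .inr (.of_leftInverse (i := ψ.toLinearMap) (p := ψ.symm.toLinearMap)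
      ψ.symm_apply_apply (.pi fun i ↦ ?_))
    rcases eq_or_ne (c i) 0 with hi | hi
    · have : Subsingleton (V ⧸ Ideal.span {t ^ c i}) := by
        rw [hi, pow_zero, Ideal.span_singleton_one]; infer_instance
      exact fun v _ ↦ ⟨0, Subsingleton.elim _ _⟩
    · exact isExactPair_quotient_span_pow (IsSMulRegular.of_ne_zero ht.ne_zero) (hc i hi)

end DiscreteValuationRing

section TensorWithRegular

variable {Q F N : Type*} [CommRing Q] [AddCommGroup F] [Module Q F] [Module.Flat Q F] {f : Q}
  {a b : Module.End Q F} [AddCommGroup N] [Module Q N] {p : F →ₗ[Q] N}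

theorem IsMatrixFactorization.isExactPair_pow_tensor (hab : IsMatrixFactorization f a b)
    (hp : Function.Surjective p) (hap : LinearMap.range a = LinearMap.ker p) {X X' : Type*}
    [AddCommGroup X] [Module Q X] [AddCommGroup X'] [Module Q X'] {t u : Q} {e c : ℕ}
    (ht : IsSMulRegular X t) (hf : ∀ v : X, f • v = (u * t ^ (e + 1)) • v) {g : X →ₗ[Q] X'}
    (hg : Function.Surjective g) (hker : ∀ v, g v = 0 ↔ ∃ w, t ^ c • w = v) (hc : c ≠ 0)
    (hce : c ≤ e) (h : IsExactPair a b (F ⊗[Q] X')) : IsExactPair t (t ^ e) (N ⊗[Q] X) := by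
  have hfE (v : F ⊗[Q] X) : a • b • v = (u * t ^ (e + 1)) • v := by
    rw [hab.tensor_smul_smul, ← sub_eq_zero, ← sub_smul]
    exact smul_tensorProduct_eq_zero (fun v ↦ by rw [sub_smul, hf, sub_self]) v
  have hE := (isExactPair_iff_of_surjective
    (p := TensorProduct.AlgebraTensorModule.lTensor (Module.End Q F) F g)
    (LinearMap.lTensor_surjective F hg) (lTensor_eq_zero_iff hg hker)).1 h
  intro y hy
  obtain ⟨v, rfl⟩ := LinearMap.rTensor_surjective X hp y
  obtain ⟨w, hw⟩ := (rTensor_eq_zero_iff hp hap X (t • v)).1 (by rw [map_smul, hy])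
  obtain ⟨z, z', rfl⟩ := exists_eq_smul_add_pow_smul_of_smul_eq_smul (ht.lTensor F) hfE hc hce hE
    hw.symm
  refine ⟨LinearMap.rTensor X p z', ?_⟩
  rw [map_add, (rTensor_eq_zero_iff hp hap X _).2 ⟨z, rfl⟩, zero_add, map_smul]

end TensorWithRegular

section Freeness

theorem mk_surjective_of_span_singleton_eq_top {W P : Type*} [CommRing W] [AddCommGroup P]
    [Module W P] {p : P} (hp : Submodule.span W {p} = ⊤) (Y : Type*) [AddCommGroup Y] [Module W Y] :
    Function.Surjective (TensorProduct.mk W P Y p) := by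
  have hsurj : Function.Surjective (LinearMap.toSpanSingleton W P p) := by
    rw [← LinearMap.range_eq_top, LinearMap.range_toSpanSingleton, hp]
  intro v
  obtain ⟨w, rfl⟩ := LinearMap.rTensor_surjective Y hsurj v
  obtain ⟨y, rfl⟩ := (TensorProduct.lid W Y).symm.surjective w
  exact ⟨y, by simp⟩

theorem free_of_isExactPair_pow {W : Type*} [CommRing W] [IsLocalRing W] [IsNoetherianRing W]
    {t : W} (ht : maximalIdeal W = Ideal.span {t}) {e : ℕ} (he : t ^ (e + 1) = 0) {Y : Type*}
    [AddCommGroup Y] [Module W Y] [Module.Finite W Y] (h : IsExactPair t (t ^ e) Y) :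
    Module.Free W Y := by
  have : Module.FinitePresentation W Y := Module.finitePresentation_of_finite W Y
  refine Module.free_of_maximalIdeal_rTensor_injective
    ((injective_iff_map_eq_zero _).2 fun v hv ↦ ?_)
  let τ : maximalIdeal W := ⟨t, ht ▸ Ideal.mem_span_singleton_self t⟩
  have hsurj : Function.Surjective (TensorProduct.mk W (maximalIdeal W) Y τ) := by
    refine mk_surjective_of_span_singleton_eq_top (top_le_iff.1 ?_) Y
    rintro ⟨v, hv⟩ -
    obtain ⟨w, rfl⟩ := Ideal.mem_span_singleton'.1 (ht ▸ hv)
    exact Submodule.mem_span_singleton.2 ⟨w, rfl⟩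
  obtain ⟨y, rfl⟩ := hsurj v
  have hty : t • y = 0 := by
    simpa using congrArg (TensorProduct.lid W Y) hv
  obtain ⟨z, rfl⟩ := h y hty
  have hτ : t ^ e • τ = 0 := Subtype.ext (by simpa [pow_succ] using he)
  rw [TensorProduct.mk_apply, ← TensorProduct.smul_tmul, hτ, TensorProduct.zero_tmul]

theorem free_of_isExactPair_quotSMulTop {R : Type*} [CommRing R] [IsLocalRing R]
    [IsNoetherianRing R] {x t : R} (hxt : maximalIdeal R = Ideal.span {x, t}) {e : ℕ}
    (he : t ^ (e + 1) ∈ Ideal.span {x}) {M : Type*} [AddCommGroup M] [Module R M]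
    [Module.Finite R M] (hx : IsSMulRegular M x) (h : IsExactPair t (t ^ e) (QuotSMulTop x M)) :
    Module.Free R M := by
  have hxm : x ∈ maximalIdeal R := hxt ▸ Ideal.subset_span (Set.mem_insert x _)
  have := isLocalRing_quotient_span_singleton hxm
  have : Module.Finite (R ⧸ Ideal.span {x}) (QuotSMulTop x M) :=
    Module.Finite.of_restrictScalars_finite R _ _
  refine free_of_free_quotSMulTop hxm hx
    (free_of_isExactPair_pow (t := Ideal.Quotient.mk (Ideal.span {x}) t) (e := e) ?_ ?_ h)
  · rw [← map_maximalIdeal_of_surjective _ Ideal.Quotient.mk_surjective, hxt, Ideal.map_span,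
      Set.image_pair, Ideal.Quotient.mk_singleton_self, Ideal.span_insert_zero]
  · rwa [← map_pow, Ideal.Quotient.eq_zero_iff_mem]

end Freeness

section OneDimensional

theorem isExactPair_quotSMulTop_iff {S : Type*} [CommRing S] {a b x : S} {M : Type*}
    [AddCommGroup M] [Module S M] : IsExactPair a b (QuotSMulTop x M) ↔
      ∀ v w : M, a • v = x • w → ∃ u u' : M, v = b • u + x • u' :=
  isExactPair_iff_of_surjective (p := (x • (⊤ : Submodule S M)).mkQ) (Submodule.mkQ_surjective _)
    (LinearMap.exact_lsmul_mkQ_smul_top M x)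

theorem isExactPair_quotSMulTop_algebraMap_iff {Q R : Type*} [CommRing Q] [CommRing R]
    [Algebra Q R] {a b x : Q} {M : Type*} [AddCommGroup M] [Module R M] [Module Q M]
    [IsScalarTower Q R M] :
    IsExactPair (algebraMap Q R a) (algebraMap Q R b) (QuotSMulTop (algebraMap Q R x) M) ↔
      IsExactPair a b (QuotSMulTop x M) := by
  simp only [isExactPair_quotSMulTop_iff, algebraMap_smul]

theorem IsExactPair.tensor_of_leftInverse {Q F M M' : Type*} [CommRing Q] [AddCommGroup F]
    [Module Q F] {a b : Module.End Q F} [AddCommGroup M] [Module Q M] [AddCommGroup M']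
    [Module Q M'] {i : M' →ₗ[Q] M} {p : M →ₗ[Q] M'} (hpi : Function.LeftInverse p i)
    (h : IsExactPair a b (F ⊗[Q] M)) : IsExactPair a b (F ⊗[Q] M') :=
  .of_leftInverse (i := TensorProduct.AlgebraTensorModule.lTensor (Module.End Q F) F i)
    (p := TensorProduct.AlgebraTensorModule.lTensor (Module.End Q F) F p)
    (fun v ↦ by
      refine (LinearMap.lTensor_comp_apply F p i v).symm.trans ?_
      rw [show p ∘ₗ i = .id from LinearMap.ext hpi, LinearMap.lTensor_id_apply]) h

theorem IsExactPair.tensor_quotSMulTop {Q F M : Type*} [CommRing Q] [AddCommGroup F] [Module Q F]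
    [Module.Flat Q F] {a b : Module.End Q F} [AddCommGroup M] [Module Q M] {x : Q}
    (hx : IsSMulRegular M x) (hba : ∀ v : F ⊗[Q] M, b • a • v = 0)
    (h' : IsExactPair b a (F ⊗[Q] M)) (h : IsExactPair a b (F ⊗[Q] M)) :
    IsExactPair a b (F ⊗[Q] QuotSMulTop x M) :=
  h'.right_of_exact
    (i := TensorProduct.AlgebraTensorModule.lTensor (Module.End Q F) F (LinearMap.lsmul Q M x))
    (p := TensorProduct.AlgebraTensorModule.lTensor (Module.End Q F) F
      (x • (⊤ : Submodule Q M)).mkQ)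
    (Module.Flat.lTensor_preserves_injective_linearMap _ hx)
    (lTensor_exact F (LinearMap.exact_lsmul_mkQ_smul_top M x) (Submodule.mkQ_surjective _))
    (LinearMap.lTensor_surjective F (Submodule.mkQ_surjective _)) hba h

namespace IsMatrixFactorization

variable {Q F N M : Type*} [CommRing Q] [AddCommGroup F] [Module Q F] [Module.Flat Q F] {f x : Q}
  {a b : Module.End Q F} [AddCommGroup N] [Module Q N] {p : F →ₗ[Q] N} [AddCommGroup M] [Module Q M]
  [Module.Finite Q M] [IsDomain (Q ⧸ Ideal.span {x})]
  [IsDiscreteValuationRing (Q ⧸ Ideal.span {x})] {t u : Q} {e : ℕ}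

omit [IsDiscreteValuationRing (Q ⧸ Ideal.span {x})] in
theorem isExactPair_pow_quotSMulTop (hab : IsMatrixFactorization f a b)
    (hp : Function.Surjective p) (hap : LinearMap.range a = LinearMap.ker p)
    (ht : Irreducible (Ideal.Quotient.mk (Ideal.span {x}) t))
    (hft : f - u * t ^ (e + 1) ∈ Ideal.span {x}) {c : ℕ} (hc : c ≠ 0) (hce : c ≤ e)
    (h : IsExactPair a b
      (F ⊗[Q] ((Q ⧸ Ideal.span {x}) ⧸ Ideal.span {Ideal.Quotient.mk (Ideal.span {x}) t ^ c}))) :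
    IsExactPair t (t ^ e) (QuotSMulTop x N) := by
  let π : Q →+* Q ⧸ Ideal.span {x} := Ideal.Quotient.mk _
  have hft' (v : Q ⧸ Ideal.span {x}) : f • v = (u * t ^ (e + 1)) • v := by
    rw [Algebra.smul_def, Algebra.smul_def]
    exact congrArg (· * v) (Ideal.Quotient.eq.2 hft)
  have hker (v : Q ⧸ Ideal.span {x}) :
      (Ideal.span {π t ^ c}).mkQ v = 0 ↔ ∃ w : Q ⧸ Ideal.span {x}, t ^ c • w = v := by
    rw [Submodule.mkQ_apply, Submodule.Quotient.mk_eq_zero, Ideal.mem_span_singleton']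
    refine exists_congr fun w ↦ ?_
    rw [Algebra.smul_def, map_pow, mul_comm]
    rfl
  exact .of_leftInverse (QuotSMulTop.equivTensorQuot x N).symm_apply_apply
    (hab.isExactPair_pow_tensor hp hap (g := (Ideal.span {π t ^ c}).mkQ.restrictScalars Q)
      (fun v w hvw ↦ mul_left_cancel₀ ht.ne_zero hvw) hft'
      (Submodule.mkQ_surjective (Ideal.span {π t ^ c})) hker hc hce h)

/-- Decompose `M / xM` over the discrete valuation ring `Q / x`. A summand `Q / (x, t ^ c)` with
`0 < c ≤ e` inherits the exactness of `(a, b)`, which forces the second alternative. -/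
theorem isExactPair_pow_or_isExactPair_pow (hab : IsMatrixFactorization f a b)
    (hp : Function.Surjective p) (hap : LinearMap.range a = LinearMap.ker p)
    (ht : Irreducible (Ideal.Quotient.mk (Ideal.span {x}) t)) (hfx : f ∉ Ideal.span {x})
    (hft : f - u * t ^ (e + 1) ∈ Ideal.span {x}) (hfM : ∀ v : M, f • v = 0)
    (hM : IsExactPair a b (F ⊗[Q] QuotSMulTop x M)) :
    IsExactPair t (t ^ e) (QuotSMulTop x M) ∨ IsExactPair t (t ^ e) (QuotSMulTop x N) := by
  let V := Q ⧸ Ideal.span {x}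
  let π : Q →+* V := Ideal.Quotient.mk _
  have : Module.Finite V (QuotSMulTop x M) := Module.Finite.of_restrictScalars_finite Q _ _
  have hπf : π f ≠ 0 := mt Ideal.Quotient.eq_zero_iff_mem.1 hfx
  have htors : Module.IsTorsion V (QuotSMulTop x M) := fun {v} ↦ by
    obtain ⟨v, rfl⟩ := Submodule.mkQ_surjective (x • (⊤ : Submodule Q M)) v
    refine ⟨⟨π f, mem_nonZeroDivisors_of_ne_zero hπf⟩, ?_⟩
    exact (map_smul (x • (⊤ : Submodule Q M)).mkQ f v).symm.trans (by rw [hfM, map_zero])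
  obtain ⟨c, hc, hce, i, q, hqi⟩ | hexact := exists_leftInverse_or_isExactPair ht htors e
  · exact .inr (hab.isExactPair_pow_quotSMulTop hp hap ht hft hc hce
      (.tensor_of_leftInverse (i := i.restrictScalars Q) (p := q.restrictScalars Q) hqi hM))
  · left
    rwa [← map_pow] at hexact

end IsMatrixFactorization

namespace IsHypersurfacePresentation

variable {Q R : Type*} [CommRing Q] [IsDomain Q] [CommRing R] [Ring.KrullDimLE 1 R] [Algebra Q R]
  {f x : Q} {M N : Type*} [AddCommGroup M] [Module R M] [Module Q M] [IsScalarTower Q R M]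
  [Module.Finite R M] [AddCommGroup N] [Module R N] [Module Q N] [IsScalarTower Q R N]
  (h : IsHypersurfacePresentation (algebraMap Q R) f)
include h

theorem isExactPair_tensor_quotSMulTop {F : Type*} [AddCommGroup F] [Module Q F] [Module.Free Q F]
    [Module.Finite Q F] {a b : Module.End Q F} (hab : IsMatrixFactorization f a b)
    {p : F →ₗ[Q] N} (hp : Function.Surjective p) (hap : LinearMap.range a = LinearMap.ker p)
    {r : ℕ} {s : R} (hs : IsSMulRegular R s) (hM : IsoUpTo s (Fin r → R) M)
    (hsNM : IsSMulRegular (N ⊗[R] M) s) (hx : IsSMulRegular M x) :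
    IsExactPair a b (F ⊗[Q] QuotSMulTop x M) := by
  obtain ⟨s, rfl⟩ := h.surjective s
  have := TensorProduct.CompatibleSMul.of_algebraMap_surjective (M := N) (N := M) h.surjective
  let σ : N ⊗[R] M ≃ₗ[Q] N ⊗[Q] M := TensorProduct.equivOfCompatibleSMul Q R Q N M
  have hsNM' : IsSMulRegular (N ⊗[Q] M) s :=
    (σ.isSMulRegular_congr s).1 ((isSMulRegular_algebraMap_iff R).1 hsNM)
  have hba : IsExactPair b a (F ⊗[Q] M) :=
    isExactPair_of_isoUpTo hp hap hM.restrictScalars hsNM' (h.isExactPair_tensor_pi hab.symm r)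
  refine hba.tensor_quotSMulTop hx (fun v ↦ ?_) (h.isExactPair_tensor_of_isoUpTo hab hs hM hba)
  rw [hab.symm.tensor_smul_smul, smul_tensorProduct_eq_zero h.smul_eq_zero]

theorem free_or_free_of_irreducible [IsLocalRing Q] [Module.Finite R N]
    [IsDomain (Q ⧸ Ideal.span {x})] [IsDiscreteValuationRing (Q ⧸ Ideal.span {x})] (hx0 : x ≠ 0)
    {t u : Q} {e : ℕ} (hxt : maximalIdeal Q = Ideal.span {x, t})
    (ht : Irreducible (Ideal.Quotient.mk (Ideal.span {x}) t)) (hfx : f ∉ Ideal.span {x})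
    (hu : IsUnit u) (hft : f - u * t ^ (e + 1) ∈ Ideal.span {x}) {r : ℕ} {s : R}
    (hs : IsSMulRegular R s) (hM : IsoUpTo s (Fin r → R) M) (hsNM : IsSMulRegular (N ⊗[R] M) s)
    (hxM : IsSMulRegular M x) (hxN : IsSMulRegular N x) : Module.Free R M ∨ Module.Free R N := by
  have := h.isRegularLocalRing
  have := h.isLocalRing
  have := h.isNoetherianRing
  have : Module.Finite Q R := .of_surjective (Algebra.linearMap Q R) h.surjective
  have : Module.Finite Q M := .trans R M
  have : Module.Finite Q N := .trans R N
  have hx : x ∈ maximalIdeal Q := hxt ▸ Ideal.subset_span (Set.mem_insert x _)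
  obtain ⟨k, a, b, p, hab, hp, hap⟩ :=
    exists_isMatrixFactorization_of_isSMulRegular hx0 hx hxN h.ne_zero h.smul_eq_zero
  have hab_quot := h.isExactPair_tensor_quotSMulTop hab hp hap hs hM hsNM hxM
  have hxtR : maximalIdeal R = Ideal.span {algebraMap Q R x, algebraMap Q R t} := by
    rw [← map_maximalIdeal_of_surjective _ h.surjective, hxt, Ideal.map_span, Set.image_pair]
  have htx : algebraMap Q R t ^ (e + 1) ∈ Ideal.span {algebraMap Q R x} := by
    have h0 := Ideal.mem_map_of_mem (algebraMap Q R) hft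
    rw [Ideal.map_span, Set.image_singleton, map_sub, h.apply_eq_zero_iff.2 dvd_rfl, zero_sub,
      neg_mem_iff, map_mul, map_pow] at h0
    exact (Ideal.unit_mul_mem_iff_mem _ (hu.map _)).1 h0
  refine (hab.isExactPair_pow_or_isExactPair_pow hp hap ht hfx hft h.smul_eq_zero hab_quot).imp
    (fun hexact ↦ ?_) fun hexact ↦ ?_ <;>
  · refine free_of_isExactPair_quotSMulTop hxtR htx ((isSMulRegular_algebraMap_iff R).2 ‹_›) ?_
    rwa [← map_pow, isExactPair_quotSMulTop_algebraMap_iff]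

end IsHypersurfacePresentation

theorem exists_irreducible_sub_mul_pow_mem {Q : Type*} [CommRing Q] [IsLocalRing Q] {x f : Q}
    [IsDomain (Q ⧸ Ideal.span {x})] [IsDiscreteValuationRing (Q ⧸ Ideal.span {x})]
    (hf : f ∈ maximalIdeal Q) (hfx : f ∉ Ideal.span {x}) :
    ∃ t u : Q, ∃ e : ℕ, maximalIdeal Q = Ideal.span {x, t} ∧
      Irreducible (Ideal.Quotient.mk (Ideal.span {x}) t) ∧ IsUnit u ∧
        f - u * t ^ (e + 1) ∈ Ideal.span {x} := by
  let π : Q →+* Q ⧸ Ideal.span {x} := Ideal.Quotient.mk _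
  have hπ : Function.Surjective π := Ideal.Quotient.mk_surjective
  have hlocal : IsLocalHom π := .of_surjective π hπ
  obtain ⟨τ, hτ⟩ := IsDiscreteValuationRing.exists_irreducible (Q ⧸ Ideal.span {x})
  obtain ⟨t, rfl⟩ := hπ τ
  obtain ⟨n, v, hv⟩ := IsDiscreteValuationRing.eq_unit_mul_pow_irreducible
    (mt Ideal.Quotient.eq_zero_iff_mem.1 hfx : π f ≠ 0) hτ
  obtain ⟨u, hu⟩ := hπ v
  have hn : n ≠ 0 := by
    rintro rfl
    refine hf (isUnit_of_map_unit π f ?_)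
    rw [hv, pow_zero, mul_one]
    exact v.isUnit
  obtain ⟨e, rfl⟩ := Nat.exists_eq_succ_of_ne_zero hn
  refine ⟨t, u, e, ?_, hτ, isUnit_of_map_unit π u (hu ▸ v.isUnit), ?_⟩
  · have hcomap : maximalIdeal Q = (Ideal.span {π t}).comap π := by
      rw [← hτ.maximalIdeal_eq, maximalIdeal_comap]
    rw [hcomap, ← Set.image_singleton, ← Ideal.map_span, Ideal.comap_map_of_surjective' π hπ,
      Ideal.mk_ker, ← Ideal.span_union, Set.union_comm]
    rfl
  · rw [← Ideal.Quotient.eq, map_mul, map_pow]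
    exact hv.trans (congrArg (· * _) hu.symm)

theorem IsHypersurfacePresentation.exists_isDiscreteValuationRing_quotient {Q R : Type*}
    [CommRing Q] [IsLocalRing Q] [CommRing R] [IsLocalRing R] {φ : Q →+* R} {f : Q}
    (h : IsHypersurfacePresentation φ f) (hdim : ringKrullDim R = 1) {S : Set (Ideal R)}
    (hS : S.Finite) (hprime : ∀ p ∈ S, p.IsPrime) (hmS : ∀ p ∈ S, ¬ maximalIdeal R ≤ p) :
    ∃ x : Q, x ≠ 0 ∧ f ∉ Ideal.span {x} ∧ (∀ p ∈ S, φ x ∉ p) ∧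
      ∃ _ : IsDomain (Q ⧸ Ideal.span {x}), IsDiscreteValuationRing (Q ⧸ Ideal.span {x}) := by
  have := h.isRegularLocalRing
  have := isDomain_of_isRegularLocalRing Q
  obtain ⟨x, hx, hx2, hxS, hxf⟩ :=
    h.exists_mem_forall_notMem (by rw [hdim]; exact one_pos) hS hprime hmS
  have := isRegularLocalRing_quotient_span_singleton hx hx2
  have := isDomain_of_isRegularLocalRing (Q ⧸ Ideal.span {x})
  have hx0 : x ≠ 0 := fun h0 ↦ hx2 (h0 ▸ Ideal.zero_mem _)
  refine ⟨x, hx0, h.notMem_span_singleton hx ((Ideal.Quotient.isDomain_iff_prime _).1 this) hxf,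
    hxS, this, isDiscreteValuationRing_of_ringKrullDim_eq_one (ENat.WithBot.add_one_cancel.1 ?_)⟩
  rw [ringKrullDim_quotient_span_singleton_succ_eq_ringKrullDim (IsSMulRegular.of_ne_zero hx0) hx,
    h.ringKrullDim_eq_add_one, hdim]

theorem IsEmbeddedHypersurface.free_or_free_of_ringKrullDim_eq_one {R : Type u} [CommRing R]
    [IsLocalRing R] (hR : IsEmbeddedHypersurface R) (hdim : ringKrullDim R = 1) {M N : Type*}
    [AddCommGroup M] [Module R M] [Module.Finite R M] [AddCommGroup N] [Module R N]
    [Module.Finite R N] {r : ℕ} {s : R} (hs : IsSMulRegular R s) (hM : IsoUpTo s (Fin r → R) M)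
    (hMm : maximalIdeal R ∉ associatedPrimes R M) (hNm : maximalIdeal R ∉ associatedPrimes R N)
    (hNMm : maximalIdeal R ∉ associatedPrimes R (N ⊗[R] M)) :
    Module.Free R M ∨ Module.Free R N := by
  have := hR.isNoetherianRing
  obtain ⟨Q, _, φ, f, h⟩ := hR
  have := h.isRegularLocalRing
  have := isDomain_of_isRegularLocalRing Q
  have : Ring.KrullDimLE 1 R := Ring.krullDimLE_iff.2 hdim.le
  obtain ⟨x, hx0, hfx, hxS, _, _⟩ := h.exists_isDiscreteValuationRing_quotient hdim
    (S := associatedPrimes R M ∪ associatedPrimes R N)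
    ((associatedPrimes.finite R M).union (associatedPrimes.finite R N))
    (fun p hp ↦ hp.elim (·.isPrime) (·.isPrime)) (fun p hp ↦ hp.elim
      (not_maximalIdeal_le_of_mem_associatedPrimes hMm)
      (not_maximalIdeal_le_of_mem_associatedPrimes hNm))
  obtain ⟨t, u, e, hxt, ht, hu, hft⟩ := exists_irreducible_sub_mul_pow_mem h.not_isUnit hfx
  let := φ.toAlgebra
  let := Module.compHom M φ
  let := Module.compHom N φ
  have : IsScalarTower Q R M := .of_algebraMap_smul fun _ _ ↦ rfl
  have : IsScalarTower Q R N := .of_algebraMap_smul fun _ _ ↦ rfl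
  exact h.free_or_free_of_irreducible hx0 hxt ht hfx hu hft hs hM
    (isSMulRegular_of_maximalIdeal_notMem_associatedPrimes hs hNMm)
    ((isSMulRegular_algebraMap_iff R).1 (isSMulRegular_iff_forall_notMem_associatedPrimes.2
      fun p hp ↦ hxS p (.inl hp)))
    ((isSMulRegular_algebraMap_iff R).1 (isSMulRegular_iff_forall_notMem_associatedPrimes.2
      fun p hp ↦ hxS p (.inr hp)))

end OneDimensional

section FiniteLengthTorsion

variable {R : Type*} [CommRing R] [IsLocalRing R] {M N : Type*} [AddCommGroup M] [Module R M]
  [AddCommGroup N] [Module R N]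

theorem subsingleton_tensorProduct_iff [Module.Finite R M] [Module.Finite R N] :
    Subsingleton (M ⊗[R] N) ↔ Subsingleton M ∨ Subsingleton N := by
  let k := ResidueField R
  rw [← IsLocalRing.subsingleton_tensorProduct (R := R) (M := M ⊗[R] N),
    (TensorProduct.AlgebraTensorModule.distribBaseChange R k M N).toEquiv.subsingleton_congr,
    ← IsLocalRing.subsingleton_tensorProduct (R := R) (M := M),
    ← IsLocalRing.subsingleton_tensorProduct (R := R) (M := N)]
  refine ⟨fun h ↦ or_iff_not_imp_right.2 fun hN ↦ ?_, fun h ↦ ?_⟩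
  · have : Nontrivial (k ⊗[R] N) := not_subsingleton_iff_nontrivial.1 hN
    exact (Module.FaithfullyFlat.subsingleton_tensorProduct_iff_left k _).1 h
  · obtain h | h := h <;> infer_instance

variable [IsNoetherianRing R]

theorem exists_pow_maximalIdeal_le_annihilator (R M : Type*) [CommRing R] [IsLocalRing R]
    [IsNoetherianRing R] [AddCommGroup M] [Module R M] [IsNoetherian R M] :
    ∃ (H : Submodule R M) (j : ℕ), maximalIdeal R ^ j ≤ Module.annihilator R H ∧
      maximalIdeal R ∉ associatedPrimes R (M ⧸ H) := by
  obtain ⟨H, ⟨j, hj⟩, hmax⟩ := set_has_maximal_iff_noetherian.2 ‹IsNoetherian R M›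
    {H | ∃ j : ℕ, maximalIdeal R ^ j • H = ⊥} ⟨⊥, 0, Submodule.smul_bot _⟩
  refine ⟨H, j, Submodule.le_annihilator_iff.2 hj, maximalIdeal_notMem_associatedPrimes_iff.2 ?_⟩
  rintro ⟨v⟩ hv
  by_contra hne
  refine hmax (H ⊔ R ∙ v) ⟨j + 1, ?_⟩ (left_lt_sup.2 fun hle ↦ hne
    ((Submodule.Quotient.mk_eq_zero H).2 ((Submodule.span_singleton_le_iff_mem _ _).1 hle)))
  have hmv : maximalIdeal R • (H ⊔ R ∙ v) ≤ H := by
    rw [Submodule.smul_sup, sup_le_iff, Submodule.smul_le (P := H) (N := R ∙ v)]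
    refine ⟨Submodule.smul_le_right, fun a ha w hw ↦ ?_⟩
    obtain ⟨c, rfl⟩ := Submodule.mem_span_singleton.1 hw
    rw [smul_comm]
    exact H.smul_mem c ((Submodule.Quotient.mk_eq_zero H).1 (hv a ha))
  rw [eq_bot_iff, pow_succ, Submodule.mul_smul, ← hj]
  exact Submodule.smul_mono le_rfl hmv

theorem eq_zero_of_pow_maximalIdeal_le_annihilator {j : ℕ}
    (hM : maximalIdeal R ^ j ≤ Module.annihilator R M)
    (hN : maximalIdeal R ∉ associatedPrimes R N) (f : M →ₗ[R] N) : f = 0 :=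
  LinearMap.ext fun v ↦ eq_zero_of_pow_maximalIdeal_smul_eq_zero hN j fun a ha ↦ by
    rw [← map_smul, Module.mem_annihilator.1 (hM ha), map_zero]

theorem maximalIdeal_notMem_associatedPrimes_pi {ι : Type*}
    (h : maximalIdeal R ∉ associatedPrimes R M) :
    maximalIdeal R ∉ associatedPrimes R (ι → M) := by
  rw [maximalIdeal_notMem_associatedPrimes_iff] at h ⊢
  exact fun v hv ↦ funext fun i ↦ h (v i) fun a ha ↦ congrFun (hv a ha) i

variable {H : Submodule R M} {j : ℕ} (hH : maximalIdeal R ^ j ≤ Module.annihilator R H)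
include hH

theorem IsoUpTo.quotient_of_pow_le_annihilator {ι : Type*} {s : R} (h : IsoUpTo s (ι → R) M)
    (hR : maximalIdeal R ∉ associatedPrimes R R) : IsoUpTo s (ι → R) (M ⧸ H) :=
  h.quotient fun f v hv ↦ LinearMap.congr_fun (eq_zero_of_pow_maximalIdeal_le_annihilator hH
    (maximalIdeal_notMem_associatedPrimes_pi hR) (f ∘ₗ H.subtype)) ⟨v, hv⟩

variable (hMN : maximalIdeal R ∉ associatedPrimes R (M ⊗[R] N))
include hMN

theorem rTensor_subtype_eq_zero_of_pow_le_annihilator : H.subtype.rTensor N = 0 := by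
  refine eq_zero_of_pow_maximalIdeal_le_annihilator (hH.trans fun a ha ↦ ?_) hMN _
  rw [Module.mem_annihilator] at ha ⊢
  intro t
  induction t with
  | zero => exact smul_zero a
  | tmul h n => rw [TensorProduct.smul_tmul', ha, TensorProduct.zero_tmul]
  | add t t' ht ht' => rw [smul_add, ht, ht', add_zero]

theorem nonempty_tensorProduct_equiv_quotient : Nonempty (M ⊗[R] N ≃ₗ[R] (M ⧸ H) ⊗[R] N) := by
  refine ⟨.ofBijective (H.mkQ.rTensor N) ⟨?_, LinearMap.rTensor_surjective N H.mkQ_surjective⟩⟩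
  rw [← LinearMap.ker_eq_bot, (rTensor_exact N (LinearMap.exact_subtype_mkQ H)
    H.mkQ_surjective).linearMap_ker_eq, rTensor_subtype_eq_zero_of_pow_le_annihilator hH hMN,
    LinearMap.range_zero]

theorem free_of_free_quotient [Module.Finite R M] [Module.Finite R N] [Nontrivial N]
    (hF : Module.Free R (M ⧸ H)) : Module.Free R M := by
  obtain ⟨p, hp⟩ : ∃ p : M →ₗ[R] H, p ∘ₗ H.subtype = .id :=
    (((LinearMap.exact_subtype_mkQ H).split_tfae H.subtype_injective H.mkQ_surjective).out 0 1).1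
      (Module.projective_lifting_property _ _ H.mkQ_surjective)
  have hHN : Subsingleton (H ⊗[R] N) := by
    refine subsingleton_of_forall_eq 0 fun t ↦ ?_
    rw [← LinearMap.id_apply (R := R) t, ← LinearMap.rTensor_id, ← hp, LinearMap.rTensor_comp,
      rTensor_subtype_eq_zero_of_pow_le_annihilator hH hMN, LinearMap.comp_zero,
      LinearMap.zero_apply]
  have : Subsingleton H :=
    (subsingleton_tensorProduct_iff.1 hHN).resolve_right (not_subsingleton N)
  exact .of_equiv (Submodule.quotEquivOfEqBot H (Submodule.subsingleton_iff_eq_bot.1 this))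

omit hH in
theorem exists_quotients_notMem_associatedPrimes [Module.Finite R M] [Module.Finite R N]
    [Nontrivial (M ⊗[R] N)] {ι : Type*} {s : R} (hM : IsoUpTo s (ι → R) M)
    (hR : maximalIdeal R ∉ associatedPrimes R R) :
    ∃ (H : Submodule R M) (K : Submodule R N),
      maximalIdeal R ∉ associatedPrimes R (M ⧸ H) ∧ maximalIdeal R ∉ associatedPrimes R (N ⧸ K) ∧
      IsoUpTo s (ι → R) (M ⧸ H) ∧ Nonempty (M ⊗[R] N ≃ₗ[R] (M ⧸ H) ⊗[R] (N ⧸ K)) ∧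
      (Module.Free R (M ⧸ H) → Module.Free R M) ∧ (Module.Free R (N ⧸ K) → Module.Free R N) := by
  obtain ⟨H, j, hH, hMH⟩ := exists_pow_maximalIdeal_le_annihilator R M
  obtain ⟨K, k, hK, hNK⟩ := exists_pow_maximalIdeal_le_annihilator R N
  obtain ⟨e⟩ := nonempty_tensorProduct_equiv_quotient hH hMN
  let e₁ := e ≪≫ₗ TensorProduct.comm R (M ⧸ H) N
  have hNM : maximalIdeal R ∉ associatedPrimes R (N ⊗[R] (M ⧸ H)) := by
    rwa [← LinearEquiv.AssociatedPrimes.eq e₁]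
  obtain ⟨e₂⟩ := nonempty_tensorProduct_equiv_quotient hK hNM
  have : Nontrivial N := not_subsingleton_iff_nontrivial.1 fun _ ↦
    not_subsingleton (M ⊗[R] N) inferInstance
  have : Nontrivial (M ⧸ H) := not_subsingleton_iff_nontrivial.1 fun _ ↦
    not_subsingleton (M ⊗[R] N) e.toEquiv.subsingleton
  exact ⟨H, K, hMH, hNK, hM.quotient_of_pow_le_annihilator hH hR,
    ⟨e₁ ≪≫ₗ e₂ ≪≫ₗ TensorProduct.comm R (N ⧸ K) (M ⧸ H)⟩,
    free_of_free_quotient hH hMN, free_of_free_quotient hK hNM⟩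

end FiniteLengthTorsion

section DimensionInduction

theorem rdepth_quotSMulTop_tensorProduct {R : Type u} [CommRing R] [IsLocalRing R] {x : R}
    (hx : x ∈ maximalIdeal R) (M N : Type u) [AddCommGroup M] [Module R M] [AddCommGroup N]
    [Module R N] : rdepth R (QuotSMulTop x (M ⊗[R] N)) =
      rdepth (R ⧸ Ideal.span {x}) (QuotSMulTop x M ⊗[R ⧸ Ideal.span {x}] QuotSMulTop x N) := by
  have := isLocalRing_quotient_span_singleton hx
  rw [rdepth_eq_of_surjective_algebraMap (S := R ⧸ Ideal.span {x}) Ideal.Quotient.mk_surjective]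
  exact rdepth_congr (quotSMulTopEquivTensor x (M ⊗[R] N) ≪≫ₗ
    TensorProduct.AlgebraTensorModule.distribBaseChange R _ M N ≪≫ₗ
    TensorProduct.congr (quotSMulTopEquivTensor x M).symm (quotSMulTopEquivTensor x N).symm)

theorem isSMulRegular_mk_of_isSMulRegular_quotSMulTop {R : Type*} [CommRing R] [IsLocalRing R]
    [IsNoetherianRing R] {x s : R} (hx : x ∈ maximalIdeal R) (hs : IsSMulRegular R s)
    (hxs : IsSMulRegular (QuotSMulTop s R) x) :
    IsSMulRegular (R ⧸ Ideal.span {x}) (Ideal.Quotient.mk (Ideal.span {x}) s) := by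
  by_cases hsu : IsUnit s
  · exact (hsu.map _).isSMulRegular _
  · refine (isSMulRegular_algebraMap_iff (R ⧸ Ideal.span {x})).2 ?_
    exact ((Submodule.quotEquivOfEq _ _ (smul_top_eq_span_singleton x)).isSMulRegular_congr s).1
      (isSMulRegular_quotSMulTop_swap ((mem_maximalIdeal s).2 hsu) hx hs hxs)

namespace IsEmbeddedHypersurface

variable {R : Type u} [CommRing R] [IsLocalRing R]

theorem exists_quotient_isSMulRegular_mk (hR : IsEmbeddedHypersurface R) {n : ℕ}
    (hdim : ringKrullDim R = (n + 2 : ℕ)) {s : R} (hs : IsSMulRegular R s) {S : Set (Ideal R)}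
    (hS : S.Finite) (hprime : ∀ p ∈ S, p.IsPrime) (hmS : ∀ p ∈ S, ¬ maximalIdeal R ≤ p) :
    ∃ x ∈ maximalIdeal R, (∀ p ∈ S, x ∉ p) ∧ IsSMulRegular R x ∧
      IsEmbeddedHypersurface (R ⧸ Ideal.span {x}) ∧
      IsSMulRegular (R ⧸ Ideal.span {x}) (Ideal.Quotient.mk (Ideal.span {x}) s) := by
  have := hR.isNoetherianRing
  have hms : maximalIdeal R ∉ associatedPrimes R (QuotSMulTop s R) := by
    by_cases hsu : IsUnit s
    · obtain ⟨u, rfl⟩ := hsu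
      refine maximalIdeal_notMem_associatedPrimes_iff.2 ?_
      rintro ⟨v⟩ -
      exact mk_eq_zero_iff_exists_eq_smul.2 ⟨u⁻¹ • v, (smul_inv_smul u v).symm⟩
    · refine maximalIdeal_notMem_associatedPrimes_of_one_le_rdepth (le_trans ?_
        (le_rdepth_quotSMulTop (hR.le_rdepth_self hdim) ((mem_maximalIdeal s).2 hsu) hs))
      exact_mod_cast n.succ_pos
  obtain ⟨x, hx, hxS, hxR, hquot⟩ := hR.exists_quotient
    (by rw [hdim]; exact_mod_cast (n + 1).succ_pos)
    (hS.union (associatedPrimes.finite R (QuotSMulTop s R)))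
    (fun p hp ↦ hp.elim (hprime p) (·.isPrime))
    (fun p hp ↦ hp.elim (hmS p) (not_maximalIdeal_le_of_mem_associatedPrimes hms))
  exact ⟨x, hx, fun p hp ↦ hxS p (.inl hp), hxR, hquot,
    isSMulRegular_mk_of_isSMulRegular_quotSMulTop hx hs
      (isSMulRegular_iff_forall_notMem_associatedPrimes.2 fun p hp ↦ hxS p (.inr hp))⟩

theorem exists_quotSMulTop (hR : IsEmbeddedHypersurface R) {n : ℕ}
    (hdim : ringKrullDim R = (n + 2 : ℕ)) {M N : Type u} [AddCommGroup M] [Module R M]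
    [Module.Finite R M] [AddCommGroup N] [Module R N] [Module.Finite R N] {s : R}
    (hs : IsSMulRegular R s) (hMm : maximalIdeal R ∉ associatedPrimes R M)
    (hNm : maximalIdeal R ∉ associatedPrimes R N)
    (hdepth : (n + 2 : ℕ) ≤ rdepth R (M ⊗[R] N)) :
    ∃ x ∈ maximalIdeal R, IsSMulRegular M x ∧ IsSMulRegular N x ∧
      IsEmbeddedHypersurface (R ⧸ Ideal.span {x}) ∧
      ringKrullDim (R ⧸ Ideal.span {x}) = (n + 1 : ℕ) ∧
      IsSMulRegular (R ⧸ Ideal.span {x}) (Ideal.Quotient.mk (Ideal.span {x}) s) ∧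
      (n + 1 : ℕ) ≤
        rdepth (R ⧸ Ideal.span {x}) (QuotSMulTop x M ⊗[R ⧸ Ideal.span {x}] QuotSMulTop x N) := by
  have := hR.isNoetherianRing
  have hMNm : maximalIdeal R ∉ associatedPrimes R (M ⊗[R] N) :=
    maximalIdeal_notMem_associatedPrimes_of_one_le_rdepth
      (le_trans (by exact_mod_cast (n + 1).succ_pos) hdepth)
  obtain ⟨x, hx, hxS, hxR, hquot, hsx⟩ := hR.exists_quotient_isSMulRegular_mk hdim hs
    (S := associatedPrimes R M ∪ associatedPrimes R N ∪ associatedPrimes R (M ⊗[R] N))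
    (((associatedPrimes.finite R M).union (associatedPrimes.finite R N)).union
      (associatedPrimes.finite R _))
    (by rintro p ((hp | hp) | hp) <;> exact hp.isPrime)
    (by
      rintro p ((hp | hp) | hp)
      exacts [not_maximalIdeal_le_of_mem_associatedPrimes hMm hp,
        not_maximalIdeal_le_of_mem_associatedPrimes hNm hp,
        not_maximalIdeal_le_of_mem_associatedPrimes hMNm hp])
  refine ⟨x, hx,
    isSMulRegular_iff_forall_notMem_associatedPrimes.2 fun p hp ↦ hxS p (.inl (.inl hp)),
    isSMulRegular_iff_forall_notMem_associatedPrimes.2 fun p hp ↦ hxS p (.inl (.inr hp)), hquot,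
    ringKrullDim_quotient_span_singleton_of_isSMulRegular hdim hx hxR, hsx, ?_⟩
  rw [← rdepth_quotSMulTop_tensorProduct hx]
  exact le_rdepth_quotSMulTop hdepth hx
    (isSMulRegular_iff_forall_notMem_associatedPrimes.2 fun p hp ↦ hxS p (.inr hp))

theorem free_or_free {n : ℕ} (hR : IsEmbeddedHypersurface R) (hdim : ringKrullDim R = n)
    {M N : Type u} [AddCommGroup M] [Module R M] [Module.Finite R M] [AddCommGroup N] [Module R N]
    [Module.Finite R N] {r : ℕ} {s : R} (hs : IsSMulRegular R s) (hM : IsoUpTo s (Fin r → R) M)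
    (hdepth : n ≤ rdepth R (M ⊗[R] N)) : Module.Free R M ∨ Module.Free R N := by
  have := hR.isNoetherianRing
  induction n generalizing R s M N with
  | zero =>
    have : Ring.KrullDimLE 0 R := Ring.krullDimLE_iff.2 hdim.le
    have := IsNoetherianRing.isArtinianRing_of_krullDimLE_zero (R := R)
    exact .inl (hM.free_of_isArtinianRing hs)
  | succ n ih =>
    obtain hMN | hMN := subsingleton_or_nontrivial (M ⊗[R] N)
    · obtain _ | _ := subsingleton_tensorProduct_iff.1 hMN
      exacts [.inl inferInstance, .inr inferInstance]
    have hm {L : Type u} [AddCommGroup L] [Module R L] (hL : (n + 1 : ℕ) ≤ rdepth R L) :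
        maximalIdeal R ∉ associatedPrimes R L :=
      maximalIdeal_notMem_associatedPrimes_of_one_le_rdepth (le_trans (by simp) hL)
    obtain ⟨H, K, hH, hK, hMH, ⟨e⟩, hfreeM, hfreeN⟩ :=
      exists_quotients_notMem_associatedPrimes (hm hdepth) hM (hm (hR.le_rdepth_self hdim))
    rw [rdepth_congr e] at hdepth
    refine Or.imp hfreeM hfreeN ?_
    obtain _ | n := n
    · exact hR.free_or_free_of_ringKrullDim_eq_one (by simpa using hdim) hs hMH hH hK
        (hm (rdepth_congr (TensorProduct.comm R (M ⧸ H) (N ⧸ K)) ▸ hdepth))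
    · obtain ⟨x, hx, hxM, hxN, hquot, hdim', hsx, hdepth'⟩ :=
        hR.exists_quotSMulTop hdim hs hH hK hdepth
      have := isLocalRing_quotient_span_singleton hx
      have := Module.Finite.of_restrictScalars_finite R (R ⧸ Ideal.span {x}) (QuotSMulTop x (M ⧸ H))
      have := Module.Finite.of_restrictScalars_finite R (R ⧸ Ideal.span {x}) (QuotSMulTop x (N ⧸ K))
      exact (ih hquot hdim' hsx (hMH.quotSMulTop x) hdepth' inferInstance).imp
        (free_of_free_quotSMulTop hx hxM) (free_of_free_quotSMulTop hx hxN)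

end IsEmbeddedHypersurface

end DimensionInduction

section Descent

variable {R S : Type u} [CommRing R] [CommRing S] [Algebra R S]

theorem rdepth_le_rdepth_baseChange [Module.Flat R S] [IsLocalHom (algebraMap R S)] (M : Type u)
    [AddCommGroup M] [Module R M] : rdepth R M ≤ rdepth S (S ⊗[R] M) :=
  rdepth_le_of_isWeaklyRegular_imp (algebraMap R S)
    (fun r hr ↦ mt (isUnit_of_map_unit (algebraMap R S) r) hr)
    fun _ hrs ↦ hrs.of_flat_of_isBaseChange (TensorProduct.isBaseChange R M S)

variable [IsLocalRing R]

theorem free_of_free_baseChange [IsNoetherianRing R] [Module.FaithfullyFlat R S] {M : Type*}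
    [AddCommGroup M] [Module R M] [Module.Finite R M] (h : Module.Free S (S ⊗[R] M)) :
    Module.Free R M := by
  have := Module.Flat.of_flat_tensorProduct R M S
  have := Module.finitePresentation_of_finite R M
  exact Module.free_of_flat_of_isLocalRing

variable [IsLocalRing S]

theorem maximalIdeal_notMem_associatedPrimes_of_baseChange [IsNoetherianRing R]
    [IsNoetherianRing S] [Module.FaithfullyFlat R S]
    (hm : maximalIdeal S = (maximalIdeal R).map (algebraMap R S)) {M : Type u} [AddCommGroup M]
    [Module R M] (h : maximalIdeal S ∉ associatedPrimes S (S ⊗[R] M)) :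
    maximalIdeal R ∉ associatedPrimes R M := by
  rw [maximalIdeal_notMem_associatedPrimes_iff] at h ⊢
  refine fun v hv ↦ Module.FaithfullyFlat.tensorProduct_mk_injective (A := R) (B := S) M ?_
  have hle : (maximalIdeal R).map (algebraMap R S) ≤
      (Submodule.span S {(1 : S) ⊗ₜ[R] v}).annihilator := by
    refine Ideal.map_le_iff_le_comap.2 fun a ha ↦
      (Submodule.mem_annihilator_span_singleton _ _).2 ?_
    rw [algebraMap_smul, ← TensorProduct.tmul_smul, hv a ha, TensorProduct.tmul_zero]
  rw [map_zero]
  exact h _ fun a ha ↦ (Submodule.mem_annihilator_span_singleton _ _).1 (hle (hm ▸ ha))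

theorem rdepth_baseChange_le [IsNoetherianRing R] [IsNoetherianRing S] [Module.FaithfullyFlat R S]
    (hm : maximalIdeal S = (maximalIdeal R).map (algebraMap R S)) (M : Type u) [AddCommGroup M]
    [Module R M] [Module.Finite R M] : rdepth S (S ⊗[R] M) ≤ rdepth R M := by
  refine ENat.forall_natCast_le_iff_le.1 fun n hn ↦ ?_
  induction n generalizing M with
  | zero => simp
  | succ n ih =>
    have hM := maximalIdeal_notMem_associatedPrimes_of_baseChange hm
      (maximalIdeal_notMem_associatedPrimes_of_one_le_rdepth (le_trans (by simp) hn))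
    obtain ⟨x, hx, hxM⟩ := exists_mem_forall_notMem_of_finite (associatedPrimes.finite R M)
      (fun p hp ↦ hp.isPrime) fun p ↦ not_maximalIdeal_le_of_mem_associatedPrimes hM
    have hreg := isSMulRegular_iff_forall_notMem_associatedPrimes.2 hxM
    refine succ_le_rdepth_iff.2 ⟨x, hx, hreg, ih _ ?_⟩
    rw [← rdepth_congr (QuotSMulTop.algebraMapTensorEquivTensorQuotSMulTop x M S)]
    exact le_rdepth_quotSMulTop hn (hm ▸ Ideal.mem_map_of_mem _ hx)
      (hreg.of_flat_of_isBaseChange (TensorProduct.isBaseChange R M S))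

theorem isLocalHom_algebraMap_of_maximalIdeal_eq_map
    (hm : maximalIdeal S = (maximalIdeal R).map (algebraMap R S)) : IsLocalHom (algebraMap R S) :=
  ((local_hom_TFAE (algebraMap R S)).out 0 2).2 hm.ge

theorem rdepth_baseChange [IsNoetherianRing R] [IsNoetherianRing S] [Module.Flat R S]
    (hm : maximalIdeal S = (maximalIdeal R).map (algebraMap R S)) (M : Type u) [AddCommGroup M]
    [Module R M] [Module.Finite R M] : rdepth S (S ⊗[R] M) = rdepth R M :=
  have := isLocalHom_algebraMap_of_maximalIdeal_eq_map hm
  have : Module.FaithfullyFlat R S := .of_flat_of_isLocalHom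
  le_antisymm (rdepth_baseChange_le hm M) (rdepth_le_rdepth_baseChange M)

theorem ringKrullDim_eq_of_maximalIdeal_eq_map [IsNoetherianRing R] [IsNoetherianRing S]
    [Module.Flat R S] (hm : maximalIdeal S = (maximalIdeal R).map (algebraMap R S)) :
    ringKrullDim S = ringKrullDim R := by
  have := isLocalHom_algebraMap_of_maximalIdeal_eq_map hm
  have := Ideal.height_eq_height_add_of_liesOver_of_hasGoingDown (maximalIdeal R) (maximalIdeal S)
  rw [← hm, Ideal.map_quotient_self, Ideal.height_bot, add_zero] at this
  rw [← maximalIdeal_height_eq_ringKrullDim, this, maximalIdeal_height_eq_ringKrullDim]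

end Descent

section MaximalCohenMacaulay

variable {R : Type u} [CommRing R] {M N : Type u} [AddCommGroup M] [Module R M] [AddCommGroup N]
  [Module R N]

theorem IsMCM.congr (h : IsMCM R M) (e : M ≃ₗ[R] N) : IsMCM R N := by
  rwa [IsMCM, ← rdepth_congr e]

theorem rdepth_self_le_rdepth_of_free [Module.Free R M] : rdepth R R ≤ rdepth R M := by
  rw [← rdepth_congr (TensorProduct.rid R M)]
  refine rdepth_le_of_isWeaklyRegular_imp id (fun _ ↦ id) fun rs hrs ↦ ?_
  rw [List.map_id]
  exact hrs.isWeaklyRegular_lTensor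

theorem rdepth_tensorProduct_le_of_free [Module.Free R M] [Nontrivial M] :
    rdepth R (M ⊗[R] N) ≤ rdepth R N := by
  let b := Module.Free.chooseBasis R M
  obtain ⟨i⟩ := b.index_nonempty
  refine rdepth_le_of_leftInverse (i := TensorProduct.mk R M N (b i))
    (p := TensorProduct.lid R N ∘ₗ LinearMap.rTensor N (b.coord i)) ?_
  ext v
  simp

variable [IsLocalRing R] [IsNoetherianRing R]

theorem exists_ringKrullDim_eq_natCast (R : Type*) [CommRing R] [IsLocalRing R]
    [IsNoetherianRing R] : ∃ d : ℕ, ringKrullDim R = d := by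
  obtain ⟨d, hd⟩ := ENat.ne_top_iff_exists.1
    (Ideal.height_ne_top (maximalIdeal.isMaximal R).ne_top)
  exact ⟨d, by rw [← maximalIdeal_height_eq_ringKrullDim, ← hd]; rfl⟩

theorem IsMCM.nontrivial (h : IsMCM R M) : Nontrivial M := by
  refine not_subsingleton_iff_nontrivial.1 fun _ ↦ ?_
  obtain ⟨d, hd⟩ := exists_ringKrullDim_eq_natCast R
  rw [IsMCM, rdepth_eq_top_of_subsingleton, hd] at h
  exact ENat.top_ne_natCast d (WithBot.coe_injective h)

theorem isMCM_of_ringKrullDim_le_rdepth [Module.Finite R M] [Nontrivial M]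
    (h : ringKrullDim R ≤ rdepth R M) : IsMCM R M :=
  rdepth_le_ringKrullDim.antisymm h

theorem IsMCM.of_tensorProduct_of_free [Module.Finite R M] [Module.Finite R N] [Module.Free R M]
    (hR : IsMCM R R) (h : IsMCM R (M ⊗[R] N)) : IsMCM R M ∧ IsMCM R N := by
  have := h.nontrivial
  have : Nontrivial M := not_subsingleton_iff_nontrivial.1 fun _ ↦
    not_subsingleton (M ⊗[R] N) inferInstance
  have : Nontrivial N := not_subsingleton_iff_nontrivial.1 fun _ ↦
    not_subsingleton (M ⊗[R] N) inferInstance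
  exact ⟨isMCM_of_ringKrullDim_le_rdepth
      (hR.ge.trans (WithBot.coe_le_coe.2 rdepth_self_le_rdepth_of_free)),
    isMCM_of_ringKrullDim_le_rdepth
      (h.ge.trans (WithBot.coe_le_coe.2 rdepth_tensorProduct_le_of_free))⟩

end MaximalCohenMacaulay

section Completion

theorem IsHypersurfaceRing.isEmbeddedHypersurface_adicCompletion {R : Type u} [CommRing R]
    [IsLocalRing R] (hR : IsHypersurfaceRing R) :
    IsEmbeddedHypersurface (AdicCompletion (maximalIdeal R) R) := by
  obtain ⟨-, -, Q, _, hQ, f, hf, hf₀, hiso⟩ := hR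
  rw [span_nonunits_eq_maximalIdeal] at hiso
  obtain ⟨e⟩ := hiso
  have := hQ.isRegularLocalRing
  refine ⟨Q, _, e.toRingHom.comp (Ideal.Quotient.mk (Ideal.span {f})), f, this,
    e.surjective.comp Ideal.Quotient.mk_surjective, ?_, nonZeroDivisors.ne_zero hf₀, hf⟩
  ext q
  exact (map_eq_zero_iff e e.injective).trans Ideal.Quotient.eq_zero_iff_mem

variable {R S : Type u} [CommRing R] [IsLocalRing R] [IsNoetherianRing R] [CommRing S]
  [IsLocalRing S] [Algebra R S] [Module.FaithfullyFlat R S]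

theorem isMCM_self_of_baseChange (hm : maximalIdeal S = (maximalIdeal R).map (algebraMap R S))
    (hS : IsEmbeddedHypersurface S) : IsMCM R R := by
  have := hS.isNoetherianRing
  obtain ⟨d, hd⟩ := exists_ringKrullDim_eq_natCast S
  refine isMCM_of_ringKrullDim_le_rdepth ?_
  rw [← rdepth_baseChange hm R, rdepth_congr (TensorProduct.AlgebraTensorModule.rid R S S),
    ← ringKrullDim_eq_of_maximalIdeal_eq_map hm, hd]
  exact_mod_cast hS.le_rdepth_self hd

theorem free_or_free_of_baseChange
    (hm : maximalIdeal S = (maximalIdeal R).map (algebraMap R S)) (hS : IsEmbeddedHypersurface S)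
    {M N : Type u} [AddCommGroup M] [Module R M] [Module.Finite R M] [AddCommGroup N] [Module R N]
    [Module.Finite R N] (hrk : HasRank R M) (hMN : IsMCM R (M ⊗[R] N)) :
    Module.Free R M ∨ Module.Free R N := by
  have := hS.isNoetherianRing
  obtain ⟨d, hd⟩ := exists_ringKrullDim_eq_natCast R
  have hR := isMCM_self_of_baseChange hm hS
  rw [IsMCM, hd] at hR hMN
  obtain ⟨r, s, hs, hiso⟩ := hrk.exists_isoUpTo
  have hsR := isSMulRegular_of_forall_notMem_minimalPrimes (by exact_mod_cast hR.ge) hd hs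
  have hsS : IsSMulRegular S (algebraMap R S s) :=
    hsR.of_flat_of_isBaseChange (IsBaseChange.linearMap R S)
  refine (hS.free_or_free ((ringKrullDim_eq_of_maximalIdeal_eq_map hm).trans hd) hsS
    (hiso.baseChange_pi S) (N := S ⊗[R] N) ?_).imp free_of_free_baseChange free_of_free_baseChange
  rw [← rdepth_congr (TensorProduct.AlgebraTensorModule.distribBaseChange R S M N),
    rdepth_baseChange hm]
  exact_mod_cast hMN.ge

end Completion

theorem isMCM_and_free_or_free_of_hasRank {R : Type u} [CommRing R] (hR : IsHypersurfaceRing R)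
    {M N : Type u} [AddCommGroup M] [Module R M] [Module.Finite R M] [AddCommGroup N] [Module R N]
    [Module.Finite R N] (hrk : HasRank R M) (hMN : IsMCM R (M ⊗[R] N)) :
    IsMCM R M ∧ IsMCM R N ∧ (Module.Free R M ∨ Module.Free R N) := by
  have := hR.1
  have := hR.2.1
  have hm := AdicCompletion.maximalIdeal_eq_map (R := R)
  have : Module.FaithfullyFlat R (AdicCompletion (maximalIdeal R) R) := .of_flat_of_isLocalHom
  have hS := hR.isEmbeddedHypersurface_adicCompletion
  have hRR := isMCM_self_of_baseChange hm hS
  have hfree := free_or_free_of_baseChange hm hS hrk hMN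
  rw [← and_assoc]
  refine ⟨?_, hfree⟩
  obtain _ | _ := hfree
  · exact hRR.of_tensorProduct_of_free hMN
  · exact (hRR.of_tensorProduct_of_free (hMN.congr (TensorProduct.comm R M N))).symm

/-- Huneke–Wiegand 1994 main theorem: over a hypersurface, if `M` or `N` has
rank and `M ⊗ N` is maximal Cohen-Macaulay, then `M` and `N` are maximal Cohen-Macaulay and
one of them is free. -/
theorem stmt19 (R : Type u) [CommRing R] (hR : IsHypersurfaceRing R)
    (M N : Type u) [AddCommGroup M] [Module R M] [Module.Finite R M]
    [AddCommGroup N] [Module R N] [Module.Finite R N]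
    (hrk : HasRank R M ∨ HasRank R N)
    (hMCM : IsMCM R (TensorProduct R M N)) :
    IsMCM R M ∧ IsMCM R N ∧ (Module.Free R M ∨ Module.Free R N) := by
  obtain hM | hN := hrk
  · exact isMCM_and_free_or_free_of_hasRank hR hM hMCM
  · obtain ⟨hN', hM', hfree⟩ :=
      isMCM_and_free_or_free_of_hasRank hR hN (hMCM.congr (TensorProduct.comm R M N))
    exact ⟨hM', hN', hfree.symm⟩

end
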